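/- arXiv:1711.08439 — 2 statements merged into one kernel-verified Lean document; each statement's English description precedes it below -/
import Mathlib

section
/- There exists a constant C > 0 such that for all R ≥ 1 and all u ∈ H¹(Γ_R), the trace of u on Σ_R satisfies ‖u‖_{L²(Σ_R)} ≤ C ‖u‖_{H¹(Γ_R)} (with C independent of R). -/
/-!
The estimate only uses the two unit squares `(R-1,R) × I` and `I × (R-1,R)` adjacent to `Σ_R`, which
lie in `Γ_R` because `R ≥ 1`; this is why the constant does not depend on `R`. On a unit segment
`[R-1,R]`, integrating the derivative of `(s - (R-1)) f(s)²` gives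
`f(R)² = ∫ (f² + 2 (s - (R-1)) f f') ≤ 2 ∫ (f² + f'²)` (`sq_endpoint_le`). Applying this on each
segment orthogonal to `Σ_R` and integrating along `I` by Fubini (`sq_edge_le`) bounds each of the two
trace integrals by `2 ‖u‖²_{H¹(Γ_R)}`, so `C = 2` works.
-/

noncomputable section
open MeasureTheory Set Real

/-- The interval `I = (-1,0)`. -/
def II : Set ℝ := Set.Ioo (-1) 0

/-- The broken guide `Γ = {x ∈ ℝ² : -1 < min(x₁,x₂) < 0}`. -/
def Gam : Set (ℝ × ℝ) := {p | -1 < min p.1 p.2 ∧ min p.1 p.2 < 0}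

/-- The box `□_L = {x : max(|x₁+1|,|x₂+1|) < L}`. -/
def Box (L : ℝ) : Set (ℝ × ℝ) := {p | |p.1 + 1| < L ∧ |p.2 + 1| < L}

/-- The finite guide `Γ_R = Γ ∩ □_{R+1}`. -/
def GamR (R : ℝ) : Set (ℝ × ℝ) := Gam ∩ Box (R + 1)

/-- The Neumann part `Σ_R = ∂Γ_R ∩ ∂□_{R+1}` of the boundary. -/
def Sig (R : ℝ) : Set (ℝ × ℝ) := frontier (GamR R) ∩ frontier (Box (R + 1))

/-- The Dirichlet part `∂Γ_R ∖ Σ_R` of the boundary. -/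
def DirB (R : ℝ) : Set (ℝ × ℝ) := frontier (GamR R) \ Sig R

/-- Squared gradient `|∇u|² = (∂₁u)² + (∂₂u)²`. -/
def gradSq2 (u : ℝ × ℝ → ℝ) (p : ℝ × ℝ) : ℝ :=
  (fderiv ℝ u p (1, 0)) ^ 2 + (fderiv ℝ u p (0, 1)) ^ 2

/-- Admissible functions for the mixed problem on `Γ_R`: `C¹` up to the boundary
(modelled by a globally `C¹` extension) vanishing on the Dirichlet part. -/
def AdmR (R : ℝ) (u : ℝ × ℝ → ℝ) : Prop :=
  ContDiff ℝ 1 u ∧ ∀ p ∈ DirB R, u p = 0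

/-- First Rayleigh quotient `λ₁(Γ_R)` of the mixed Dirichlet–Neumann Laplacian on `Γ_R`. -/
def lamR (R : ℝ) : ℝ :=
  sInf {r | ∃ u : ℝ × ℝ → ℝ, AdmR R u ∧ (∫ p in GamR R, (u p) ^ 2) ≠ 0 ∧
    r = (∫ p in GamR R, gradSq2 u p) / ∫ p in GamR R, (u p) ^ 2}

/-- First Rayleigh quotient `λ₁(Γ)` of the Dirichlet Laplacian on the broken guide `Γ`. -/
def lamG : ℝ :=
  sInf {r | ∃ u : ℝ × ℝ → ℝ, ContDiff ℝ 1 u ∧ HasCompactSupport u ∧ tsupport u ⊆ Gam ∧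
    (∫ p in Gam, (u p) ^ 2) ≠ 0 ∧
    r = (∫ p in Gam, gradSq2 u p) / ∫ p in Gam, (u p) ^ 2}

/-- `ω = √(π² − λ₁(Γ))`. -/
def omega : ℝ := Real.sqrt (π ^ 2 - lamG)

/-- One-dimensional trace inequality on the unit segment `(R-1, R)`. The energy density `f² + f'²`
is allowed to be replaced by any continuous majorant `h`. -/
lemma sq_endpoint_le {f f' h : ℝ → ℝ} (R : ℝ) (hf : ∀ s, HasDerivAt f (f' s) s)
    (hf' : Continuous f') (hh : Continuous h) (hle : ∀ s, f s ^ 2 + f' s ^ 2 ≤ h s) :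
    f R ^ 2 ≤ 2 * ∫ s in Ioo (R - 1) R, h s := by
  have hfc : Continuous f := continuous_iff_continuousAt.2 fun s => (hf s).continuousAt
  have hd : ∀ s ∈ uIcc (R - 1) R, HasDerivAt (fun s => (s - (R - 1)) * f s ^ 2)
      (f s ^ 2 + (s - (R - 1)) * (2 * f s * f' s)) s := by
    intro s _
    refine (((hasDerivAt_id' s).sub_const (R - 1)).fun_mul ((hf s).fun_pow 2)).congr_deriv ?_
    simp
  have hc : Continuous fun s => f s ^ 2 + (s - (R - 1)) * (2 * f s * f' s) := by fun_prop
  have hftc := intervalIntegral.integral_eq_sub_of_hasDerivAt hd (hc.intervalIntegrable _ _)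
  have hmono : ∫ s in (R - 1)..R, (f s ^ 2 + (s - (R - 1)) * (2 * f s * f' s))
      ≤ ∫ s in (R - 1)..R, 2 * h s := by
    refine intervalIntegral.integral_mono_on (by linarith) (hc.intervalIntegrable _ _)
      ((continuous_const.mul hh).intervalIntegrable _ _) fun s hs => ?_
    have h0 : 0 ≤ s - (R - 1) := by linarith [hs.1]
    have h1 : s - (R - 1) ≤ 1 := by linarith [hs.2]
    have h2 : 2 * f s * f' s ≤ f s ^ 2 + f' s ^ 2 := by nlinarith [sq_nonneg (f s - f' s)]
    nlinarith [hle s, sq_nonneg (f s), sq_nonneg (f' s), mul_le_mul_of_nonneg_left h2 h0,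
      mul_le_mul_of_nonneg_right h1 (add_nonneg (sq_nonneg (f s)) (sq_nonneg (f' s)))]
  rw [hftc, intervalIntegral.integral_const_mul,
    intervalIntegral.integral_of_le (by linarith), integral_Ioc_eq_integral_Ioo] at hmono
  simpa using hmono

lemma integrableOn_of_subset_isCompact {X : Type*} [TopologicalSpace X] [MeasurableSpace X]
    [OpensMeasurableSpace X] [T2Space X] {μ : Measure X} [IsFiniteMeasureOnCompacts μ]
    {F : X → ℝ} (hF : Continuous F) {s k : Set X} (hk : IsCompact k) (hs : s ⊆ k) :
    IntegrableOn F s μ :=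
  (hF.continuousOn.integrableOn_compact hk).mono_set hs

/-- Trace inequality on the edge `{R} × I` of the unit square `(R-1,R) × I`, in terms of a family of
one-variable functions `s ↦ f s t` and a continuous majorant `h` of their energy density. -/
lemma sq_edge_le {f f' : ℝ → ℝ → ℝ} {h : ℝ × ℝ → ℝ} (R : ℝ)
    (hfR : Continuous fun t => f R t)
    (hf : ∀ t s, HasDerivAt (fun s => f s t) (f' s t) s)
    (hf' : ∀ t, Continuous fun s => f' s t) (hh : Continuous h)
    (hle : ∀ s t, f s t ^ 2 + f' s t ^ 2 ≤ h (s, t)) :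
    ∫ t in II, f R t ^ 2 ≤ 2 * ∫ p in Ioo (R - 1) R ×ˢ II, h p := by
  have hint : IntegrableOn h (Ioo (R - 1) R ×ˢ II) :=
    integrableOn_of_subset_isCompact hh
      ((isCompact_Icc (a := R - 1) (b := R)).prod (isCompact_Icc (a := (-1 : ℝ)) (b := 0)))
      (prod_mono Ioo_subset_Icc_self Ioo_subset_Icc_self)
  have hint' : Integrable h
      ((volume.restrict (Ioo (R - 1) R)).prod (volume.restrict II)) := by
    rw [Measure.prod_restrict]; exact hint
  have hfub : ∫ p in Ioo (R - 1) R ×ˢ II, h p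
      = ∫ t in II, ∫ s in Ioo (R - 1) R, h (s, t) := by
    rw [Measure.volume_eq_prod, ← Measure.prod_restrict]
    exact integral_prod_symm h hint'
  rw [hfub, ← integral_const_mul]
  refine integral_mono ?_ (hint'.integral_prod_right.const_mul 2) fun t => ?_
  · exact integrableOn_of_subset_isCompact (hfR.pow 2)
      (isCompact_Icc (a := (-1 : ℝ)) (b := 0)) Ioo_subset_Icc_self
  · exact sq_endpoint_le R (hf t) (hf' t) (by fun_prop) fun s => hle s t

lemma rect_subset_GamR {R : ℝ} (hR : 1 ≤ R) : Ioo (R - 1) R ×ˢ II ⊆ GamR R := by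
  rintro ⟨s, t⟩ ⟨⟨hs1, hs2⟩, ht1, ht2⟩
  dsimp only at hs1 hs2 ht1 ht2
  exact ⟨⟨lt_min (by dsimp; linarith) ht1, (min_le_right _ _).trans_lt ht2⟩,
    abs_lt.2 ⟨by dsimp; linarith, by dsimp; linarith⟩,
    abs_lt.2 ⟨by dsimp; linarith, by dsimp; linarith⟩⟩

lemma swap_mem_GamR {R : ℝ} {p : ℝ × ℝ} : p.swap ∈ GamR R ↔ p ∈ GamR R := by
  simp [GamR, Gam, Box, and_comm, or_comm]

lemma GamR_subset_Icc (R : ℝ) :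
    GamR R ⊆ Icc (-(R + 1) - 1) R ×ˢ Icc (-(R + 1) - 1) R := by
  rintro ⟨s, t⟩ ⟨-, h1, h2⟩
  obtain ⟨h1, h1'⟩ := abs_lt.1 h1
  obtain ⟨h2, h2'⟩ := abs_lt.1 h2
  dsimp only at h1 h1' h2 h2'
  exact ⟨⟨by dsimp; linarith, by dsimp; linarith⟩, by dsimp; linarith, by dsimp; linarith⟩

/-- Lemma 1.3: uniform trace estimate. There is a constant `C > 0`,
independent of `R`, such that for all `R ≥ 1` and all `u ∈ H¹(Γ_R)` (modelled by a
globally `C¹` function), the trace of `u` on `Σ_R = ({R}×I) ∪ (I×{R})` satisfies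
`‖u‖_{L²(Σ_R)} ≤ C ‖u‖_{H¹(Γ_R)}`. -/
theorem uniform_trace_estimate :
    ∃ C : ℝ, 0 < C ∧ ∀ R : ℝ, 1 ≤ R → ∀ u : ℝ × ℝ → ℝ, ContDiff ℝ 1 u →
      Real.sqrt ((∫ t in II, (u (R, t)) ^ 2) + ∫ t in II, (u (t, R)) ^ 2) ≤
        C * Real.sqrt (∫ p in GamR R, ((u p) ^ 2 + gradSq2 u p)) := by
  refine ⟨2, two_pos, fun R hR u hu => ?_⟩
  have huc : Continuous u := hu.continuous
  have hD : Continuous (fderiv ℝ u) := hu.continuous_fderiv one_ne_zero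
  have hdiff : ∀ p, HasFDerivAt u (fderiv ℝ u p) p := fun p =>
    (hu.differentiable one_ne_zero p).hasFDerivAt
  set H : ℝ × ℝ → ℝ := fun p => u p ^ 2 + gradSq2 u p with hH
  have hHc : Continuous H := by
    unfold gradSq2 at hH
    rw [hH]
    fun_prop
  have hH0 : ∀ p, 0 ≤ H p := fun p => by simp only [hH, gradSq2]; positivity
  have hHint : IntegrableOn H (GamR R) :=
    integrableOn_of_subset_isCompact hHc (isCompact_Icc.prod isCompact_Icc)
      (GamR_subset_Icc R)
  have e1 : ∫ t in II, u (R, t) ^ 2 ≤ 2 * ∫ p in GamR R, H p := by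
    refine (sq_edge_le (f := fun s t => u (s, t)) (f' := fun s t => fderiv ℝ u (s, t) (1, 0))
      (h := H) R (by fun_prop) (fun t s => ?_) (fun t => by fun_prop) hHc fun s t => ?_).trans ?_
    · exact (hdiff (s, t)).comp_hasDerivAt s ((hasDerivAt_id' s).prodMk (hasDerivAt_const s t))
    · simp only [hH, gradSq2]; nlinarith [sq_nonneg (fderiv ℝ u (s, t) (0, 1))]
    · exact mul_le_mul_of_nonneg_left (setIntegral_mono_set hHint
        (Filter.Eventually.of_forall hH0) (rect_subset_GamR hR).eventuallyLE) two_pos.le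
  -- `Γ_R` is symmetric under exchange of the coordinates, so the other edge is the same estimate
  -- for the swapped density.
  have hswap : ∫ p in GamR R, H p.swap = ∫ p in GamR R, H p := by
    have hpre : Prod.swap ⁻¹' GamR R = GamR R := by ext p; exact swap_mem_GamR
    have hmp : MeasurePreserving (Prod.swap : ℝ × ℝ → ℝ × ℝ) volume volume :=
      Measure.measurePreserving_swap
    have := hmp.setIntegral_preimage_emb MeasurableEquiv.prodComm.measurableEmbedding H (GamR R)
    rwa [hpre] at this
  have hHint' : IntegrableOn (fun p => H p.swap) (GamR R) :=
    integrableOn_of_subset_isCompact (hHc.comp continuous_swap)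
      (isCompact_Icc.prod isCompact_Icc) (GamR_subset_Icc R)
  have e2 : ∫ t in II, u (t, R) ^ 2 ≤ 2 * ∫ p in GamR R, H p := by
    rw [← hswap]
    refine (sq_edge_le (f := fun s t => u (t, s)) (f' := fun s t => fderiv ℝ u (t, s) (0, 1))
      (h := fun p => H p.swap) R (by fun_prop) (fun t s => ?_) (fun t => by fun_prop)
      (hHc.comp continuous_swap) fun s t => ?_).trans ?_
    · exact (hdiff (t, s)).comp_hasDerivAt s ((hasDerivAt_const s t).prodMk (hasDerivAt_id' s))
    · simp only [hH, gradSq2, Prod.swap]; nlinarith [sq_nonneg (fderiv ℝ u (t, s) (1, 0))]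
    · exact mul_le_mul_of_nonneg_left (setIntegral_mono_set hHint'
        (Filter.Eventually.of_forall fun p => hH0 _) (rect_subset_GamR hR).eventuallyLE) two_pos.le
  refine Real.sqrt_le_iff.2 ⟨by positivity, ?_⟩
  rw [mul_pow, Real.sq_sqrt (integral_nonneg hH0)]
  linarith
end
end

section
/- The second Rayleigh quotient of the Dirichlet Laplacian on the broken guide Γ is at least π²: for every two-dimensional subspace E ⊂ H¹₀(Γ), one has sup_{0≠u∈E} (∫_Γ|∇u|²dx / ∫_Γ|u|²dx) ≥ π². Consequently the Dirichlet Laplacian on Γ has at most one eigenvalue below π². -/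
/-!
Why the theorem holds. The guide `Γ` is the union of the corner square `Q = (-1, 0)²` and two
half-strips of width one. On a cross-section of a half-strip a test function vanishes at both ends,
so the one-dimensional Dirichlet inequality gives `π² ∫ w² ≤ ∫ |∇w|²` there. The first nonzero Neumann
eigenvalue of the unit square is also `π²`, hence `π² (∫_Q w² - (∫_Q w)²) ≤ ∫_Q |∇w|²`. Adding up,
`energy_lower_bound` states `π² (∫_Γ w² - (∫_Q w)²) ≤ ∫_Γ |∇w|²`: the Dirichlet form is at least
`π²` up to a defect of rank one. Any two-dimensional space of test functions contains a nonzero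
element with `∫_Q w = 0`, which is the claim on the second Rayleigh quotient (`second_rayleigh`).

For the second claim, let `u`, `u'` be independent eigenfunctions with eigenvalues `λ`, `λ'` below
`π²`. They are classical solutions of finite energy, continuous and zero off `Γ`, but not compactly
supported in `Γ`; all integrations by parts are therefore done after multiplication by cutoffs that
depend on the level of `u² + u'²` and on the distance to the origin (`CutoffSeq`). The gradient of
these cutoffs is controlled by `|∇u|² + |∇u'|² + u² + u'²`, so dominated convergence removes them
without any trace theory or density argument. This yields the orthogonality of `u` and `u'` when
`λ ≠ λ'` (`eigen_orthogonal`) and `π² ∫ v² ≤ ∫ v (-Δv)` for combinations `v` of mean zero over `Q`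
(`eigen_comb_bound`). The two facts contradict `λ, λ' < π²` (`eigen_dependent`).
-/

noncomputable section
open MeasureTheory Set Real

/-- Partial derivative `∂₁`. -/
def pd1 (u : ℝ × ℝ → ℝ) : ℝ × ℝ → ℝ := fun p => fderiv ℝ u p (1, 0)

/-- Partial derivative `∂₂`. -/
def pd2 (u : ℝ × ℝ → ℝ) : ℝ × ℝ → ℝ := fun p => fderiv ℝ u p (0, 1)

/-- Laplacian `Δ = ∂₁² + ∂₂²`. -/
def lap2 (u : ℝ × ℝ → ℝ) (p : ℝ × ℝ) : ℝ := pd1 (pd1 u) p + pd2 (pd2 u) p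

/-- Eigenfunction of the Dirichlet Laplacian on `Γ` with eigenvalue `lam`:
a nonzero function in `H¹₀(Γ) ∩ L²`, classical solution of `-Δu = λ u` in `Γ`. -/
def IsEigenGam (lam : ℝ) (u : ℝ × ℝ → ℝ) : Prop :=
  Continuous u ∧ (∀ p ∉ Gam, u p = 0) ∧ ContDiffOn ℝ 2 u Gam ∧
  IntegrableOn (fun p => (u p) ^ 2) Gam ∧ IntegrableOn (fun p => gradSq2 u p) Gam ∧
  (∀ p ∈ Gam, -(lap2 u p) = lam * u p) ∧ (∃ p, u p ≠ 0)

/-! ### One-dimensional Wirtinger inequalities -/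

/-- Dirichlet Wirtinger inequality on `(-1, 0)` with a constant `k² < π²`. With
`T x = k tan (k (x + 1/2))`, smooth on `[-1, 0]` because `k < π`, one has
`f'² - k² f² - (-T f²)' = (f' + T f)² ≥ 0`, and `-T f²` vanishes at both end points. -/
lemma wirtinger_lt {f f' : ℝ → ℝ} (hf : ∀ x, HasDerivAt f (f' x) x) (hf' : Continuous f')
    (h1 : f (-1) = 0) (h0 : f 0 = 0) {k : ℝ} (hk0 : 0 < k) (hk : k < π) :
    k ^ 2 * ∫ x in (-1 : ℝ)..0, f x ^ 2 ≤ ∫ x in (-1 : ℝ)..0, f' x ^ 2 := by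
  have hfc : Continuous f := continuous_iff_continuousAt.2 fun x => (hf x).continuousAt
  have hcos : ∀ x ∈ Icc (-1 : ℝ) 0, Real.cos (k * (x + 1 / 2)) ≠ 0 := by
    intro x hx
    apply ne_of_gt
    apply Real.cos_pos_of_mem_Ioo
    constructor <;> nlinarith [hx.1, hx.2]
  have htc : ContinuousOn (fun x => Real.tan (k * (x + 1 / 2))) (Icc (-1 : ℝ) 0) :=
    Real.continuousOn_tan.comp (by fun_prop) (fun x hx => hcos x hx)
  set H' : ℝ → ℝ := fun x => -k * (k * (1 + Real.tan (k * (x + 1 / 2)) ^ 2)) * f x ^ 2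
      - 2 * k * Real.tan (k * (x + 1 / 2)) * f x * f' x with hH'
  have hH'c : ContinuousOn H' (Icc (-1 : ℝ) 0) := by
    have := hfc.continuousOn (s := Icc (-1 : ℝ) 0)
    have := hf'.continuousOn (s := Icc (-1 : ℝ) 0)
    fun_prop
  have hd : ∀ x ∈ uIcc (-1 : ℝ) 0,
      HasDerivAt (fun x => -k * Real.tan (k * (x + 1 / 2)) * f x ^ 2) (H' x) x := by
    intro x hx
    rw [uIcc_of_le (by norm_num)] at hx
    have ht := Real.hasDerivAt_tan (hcos x hx)
    have hl : HasDerivAt (fun x : ℝ => k * (x + 1 / 2)) k x := by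
      simpa using ((hasDerivAt_id x).add_const (1 / 2 : ℝ)).const_mul k
    have h2 := ((ht.comp x hl).const_mul (-k)).mul ((hf x).pow 2)
    refine h2.congr_deriv ?_
    simp only [hH', Function.comp, Pi.pow_apply]
    have hc := hcos x hx
    have : 1 / Real.cos (k * (x + 1 / 2)) ^ 2 = 1 + Real.tan (k * (x + 1 / 2)) ^ 2 := by
      rw [← Real.inv_one_add_tan_sq hc]; simp
    rw [this]; push_cast; ring
  have hint : IntervalIntegrable H' volume (-1) 0 :=
    ContinuousOn.intervalIntegrable (by rwa [uIcc_of_le (by norm_num)])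
  have hI := intervalIntegral.integral_eq_sub_of_hasDerivAt hd hint
  rw [h1, h0] at hI
  have hmono : ∫ x in (-1 : ℝ)..0, H' x ≤ ∫ x in (-1 : ℝ)..0, (f' x ^ 2 - k ^ 2 * f x ^ 2) := by
    apply intervalIntegral.integral_mono_on (by norm_num) hint
      (Continuous.intervalIntegrable (by fun_prop) _ _)
    intro x _
    simp only [hH']
    nlinarith [sq_nonneg (f' x + k * Real.tan (k * (x + 1 / 2)) * f x)]
  rw [hI, intervalIntegral.integral_sub (f := fun x => f' x ^ 2)
    (Continuous.intervalIntegrable (by fun_prop) _ _)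
    (Continuous.intervalIntegrable (by fun_prop) _ _),
    intervalIntegral.integral_const_mul] at hmono
  norm_num at hmono
  linarith

/-- Dirichlet Wirtinger inequality on `(-1, 0)` with the sharp constant `π²`, from
`wirtinger_lt` by letting `k → π`. The strict inequality is needed there because the tangent blows
up at the end points for `k = π`. -/
lemma wirtinger_dirichlet {f f' : ℝ → ℝ} (hf : ∀ x, HasDerivAt f (f' x) x) (hf' : Continuous f')
    (h1 : f (-1) = 0) (h0 : f 0 = 0) :
    π ^ 2 * ∫ x in (-1 : ℝ)..0, f x ^ 2 ≤ ∫ x in (-1 : ℝ)..0, f' x ^ 2 := by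
  have ht : Filter.Tendsto (fun k : ℝ => k ^ 2 * ∫ x in (-1 : ℝ)..0, f x ^ 2) (nhdsWithin π (Iio π))
      (nhds (π ^ 2 * ∫ x in (-1 : ℝ)..0, f x ^ 2)) :=
    tendsto_nhdsWithin_of_tendsto_nhds (Continuous.tendsto (by fun_prop) _)
  refine le_of_tendsto ht ?_
  filter_upwards [Ioo_mem_nhdsLT Real.pi_pos] with k hk
  exact wirtinger_lt hf hf' h1 h0 hk.1 hk.2

/-- Poincaré–Wirtinger inequality on `(-1, 0)` with the sharp constant `π²`. The antiderivative
`F` of `f` minus its mean vanishes at both ends, so the Dirichlet inequality applies to it, and the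
claim follows from `∫ (f' + π² F)² ≥ 0` and `∫ f' F = -∫ (f - mean)²`. -/
lemma wirtinger_neumann {f f' : ℝ → ℝ} (hf : ∀ x, HasDerivAt f (f' x) x) (hf' : Continuous f') :
    π ^ 2 * ∫ x in (-1 : ℝ)..0, (f x - ∫ y in (-1 : ℝ)..0, f y) ^ 2
      ≤ ∫ x in (-1 : ℝ)..0, f' x ^ 2 := by
  have hfc : Continuous f := continuous_iff_continuousAt.2 fun x => (hf x).continuousAt
  set m := ∫ y in (-1 : ℝ)..0, f y with hm
  set F : ℝ → ℝ := fun x => ∫ y in (-1 : ℝ)..x, (f y - m) with hF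
  have hgc : Continuous fun y => f y - m := by fun_prop
  have hFd : ∀ x, HasDerivAt F (f x - m) x := fun x =>
    intervalIntegral.integral_hasDerivAt_right (hgc.intervalIntegrable _ _)
      (hgc.stronglyMeasurableAtFilter _ _) hgc.continuousAt
  have hFc : Continuous F := continuous_iff_continuousAt.2 fun x => (hFd x).continuousAt
  have hF1 : F (-1) = 0 := by simp [hF]
  have hF0 : F 0 = 0 := by
    simp only [hF]
    rw [intervalIntegral.integral_sub (hfc.intervalIntegrable _ _) (by simp)]
    simp [← hm]
  have hW := wirtinger_dirichlet hFd hgc hF1 hF0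
  -- integration by parts: `∫ (f - m)² = - ∫ f' F`
  have hP : ∫ x in (-1 : ℝ)..0, ((f x - m) ^ 2 + f' x * F x) = 0 := by
    have := intervalIntegral.integral_eq_sub_of_hasDerivAt (a := -1) (b := 0)
      (f := fun x => (f x - m) * F x) (f' := fun x => (f x - m) ^ 2 + f' x * F x) ?_
      (Continuous.intervalIntegrable (by fun_prop) _ _)
    · rw [this, hF1, hF0]; simp
    · intro x _
      refine (((hf x).sub_const m).mul (hFd x)).congr_deriv (by ring)
  -- `0 ≤ ∫ (f' + π² F)²`
  have hS : 0 ≤ ∫ x in (-1 : ℝ)..0, (f' x + π ^ 2 * F x) ^ 2 :=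
    intervalIntegral.integral_nonneg (by norm_num) fun x _ => sq_nonneg _
  have hE : ∫ x in (-1 : ℝ)..0, (f' x + π ^ 2 * F x) ^ 2
      = (∫ x in (-1 : ℝ)..0, f' x ^ 2)
        + 2 * π ^ 2 * (∫ x in (-1 : ℝ)..0, ((f x - m) ^ 2 + f' x * F x))
        - 2 * π ^ 2 * (∫ x in (-1 : ℝ)..0, (f x - m) ^ 2)
        + π ^ 4 * (∫ x in (-1 : ℝ)..0, F x ^ 2) := by
    rw [← intervalIntegral.integral_const_mul, ← intervalIntegral.integral_const_mul,
      ← intervalIntegral.integral_const_mul, ← intervalIntegral.integral_add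
        (Continuous.intervalIntegrable (by fun_prop) _ _)
        (Continuous.intervalIntegrable (by fun_prop) _ _), ← intervalIntegral.integral_sub
        (Continuous.intervalIntegrable (by fun_prop) _ _)
        (Continuous.intervalIntegrable (by fun_prop) _ _), ← intervalIntegral.integral_add
        (Continuous.intervalIntegrable (by fun_prop) _ _)
        (Continuous.intervalIntegrable (by fun_prop) _ _)]
    congr 1; ext x; ring
  rw [hE, hP] at hS
  have := mul_le_mul_of_nonneg_left hW (sq_nonneg π)
  nlinarith

/-! ### Poincaré inequality on the unit square -/

lemma swap_of_continuous {F : ℝ → ℝ → ℝ} (hF : Continuous F.uncurry) :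
    ∫ x in (-1 : ℝ)..0, ∫ y in (-1 : ℝ)..0, F x y
      = ∫ y in (-1 : ℝ)..0, ∫ x in (-1 : ℝ)..0, F x y := by
  apply intervalIntegral_intervalIntegral_swap
  apply (hF.continuousOn.integrableOn_compact
    (isCompact_Icc.prod (isCompact_Icc (a := (-1 : ℝ)) (b := 0)) : IsCompact
      (Icc (-1 : ℝ) 0 ×ˢ Icc (-1 : ℝ) 0))).mono_set
  rw [uIoc_of_le (by norm_num)]
  exact prod_mono Ioc_subset_Icc_self Ioc_subset_Icc_self

lemma variance_identity {g : ℝ → ℝ} (hg : Continuous g) (c : ℝ)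
    (hc : ∫ x in (-1 : ℝ)..0, g x = c) :
    ∫ x in (-1 : ℝ)..0, (g x - c) ^ 2 = (∫ x in (-1 : ℝ)..0, g x ^ 2) - c ^ 2 := by
  have : ∀ x, (g x - c) ^ 2 = (g x ^ 2 - 2 * c * g x) + c ^ 2 := fun x => by ring
  simp_rw [this]
  rw [intervalIntegral.integral_add (Continuous.intervalIntegrable (by fun_prop) _ _)
    (Continuous.intervalIntegrable (by fun_prop) _ _),
    intervalIntegral.integral_sub (Continuous.intervalIntegrable (by fun_prop) _ _)
    (Continuous.intervalIntegrable (by fun_prop) _ _),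
    intervalIntegral.integral_const_mul, hc]
  simp; ring

lemma sq_integral_le {g : ℝ → ℝ} (hg : Continuous g) :
    (∫ x in (-1 : ℝ)..0, g x) ^ 2 ≤ ∫ x in (-1 : ℝ)..0, g x ^ 2 := by
  have h := variance_identity hg _ rfl
  have h0 : 0 ≤ ∫ x in (-1 : ℝ)..0, (g x - ∫ x in (-1 : ℝ)..0, g x) ^ 2 :=
    intervalIntegral.integral_nonneg (by norm_num) fun x _ => sq_nonneg _
  linarith

/-- Poincaré inequality with constant `π²` on the unit square `(-1, 0)²`, for functions of
arbitrary mean. The variance of `u` is the mean variance along horizontal lines plus the variance of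
the horizontal average `a`. By Jensen the latter is at most the mean variance along vertical lines,
so that `wirtinger_neumann` bounds the two parts by `∫ u₁²` and `∫ u₂²`. -/
lemma poincare_square {u u₁ u₂ : ℝ × ℝ → ℝ} (hu : Continuous u)
    (hu₁ : Continuous u₁) (hu₂ : Continuous u₂)
    (h₁ : ∀ x y, HasDerivAt (fun t => u (t, y)) (u₁ (x, y)) x)
    (h₂ : ∀ x y, HasDerivAt (fun t => u (x, t)) (u₂ (x, y)) y) :
    π ^ 2 * ((∫ x in (-1 : ℝ)..0, ∫ y in (-1 : ℝ)..0, u (x, y) ^ 2)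
        - (∫ x in (-1 : ℝ)..0, ∫ y in (-1 : ℝ)..0, u (x, y)) ^ 2)
      ≤ (∫ x in (-1 : ℝ)..0, ∫ y in (-1 : ℝ)..0, u₁ (x, y) ^ 2)
        + ∫ x in (-1 : ℝ)..0, ∫ y in (-1 : ℝ)..0, u₂ (x, y) ^ 2 := by
  set a : ℝ → ℝ := fun y => ∫ x in (-1 : ℝ)..0, u (x, y) with ha
  set b : ℝ → ℝ := fun x => ∫ y in (-1 : ℝ)..0, u (x, y) with hb
  have hac : Continuous a := by
    apply intervalIntegral.continuous_parametric_intervalIntegral_of_continuous'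
    simp only [Function.uncurry_def]; fun_prop
  have hbc : Continuous b := by
    apply intervalIntegral.continuous_parametric_intervalIntegral_of_continuous'
    simp only [Function.uncurry_def]; fun_prop
  set m := ∫ x in (-1 : ℝ)..0, b x with hm
  have ham : ∫ y in (-1 : ℝ)..0, a y = m :=
    (swap_of_continuous (F := fun x y => u (x, y)) (by simpa [Function.uncurry_def] using hu)).symm
  rw [swap_of_continuous (F := fun x y => u (x, y) ^ 2)
      (by simp only [Function.uncurry_def]; fun_prop),
    swap_of_continuous (F := fun x y => u₁ (x, y) ^ 2)
      (by simp only [Function.uncurry_def]; fun_prop)]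
  have cont1 : ∀ F : ℝ → ℝ → ℝ, Continuous F.uncurry →
      IntervalIntegrable (fun x => ∫ y in (-1 : ℝ)..0, F x y) volume (-1) 0 := fun F hF =>
    (intervalIntegral.continuous_parametric_intervalIntegral_of_continuous'
      hF _ _).intervalIntegrable _ _
  -- the part of the variance seen along horizontal lines
  have N1 : π ^ 2 * ((∫ y in (-1 : ℝ)..0, ∫ x in (-1 : ℝ)..0, u (x, y) ^ 2)
      - ∫ y in (-1 : ℝ)..0, a y ^ 2) ≤ ∫ y in (-1 : ℝ)..0, ∫ x in (-1 : ℝ)..0, u₁ (x, y) ^ 2 := by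
    rw [← intervalIntegral.integral_sub
      (cont1 (fun y x => u (x, y) ^ 2) (by simp only [Function.uncurry_def]; fun_prop))
      (Continuous.intervalIntegrable (by fun_prop) _ _), ← intervalIntegral.integral_const_mul]
    apply intervalIntegral.integral_mono_on (by norm_num)
    · exact ((cont1 (fun y x => u (x, y) ^ 2) (by simp only [Function.uncurry_def]; fun_prop)).sub
        (Continuous.intervalIntegrable (by fun_prop) _ _)).const_mul _
    · exact cont1 (fun y x => u₁ (x, y) ^ 2) (by simp only [Function.uncurry_def]; fun_prop)
    · intro y _
      have := wirtinger_neumann (f := fun x => u (x, y)) (fun x => h₁ x y) (by fun_prop)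
      rwa [variance_identity (by fun_prop) _ rfl] at this
  -- the part of the variance seen along vertical lines
  have N2 : π ^ 2 * ((∫ y in (-1 : ℝ)..0, a y ^ 2) - m ^ 2)
      ≤ ∫ x in (-1 : ℝ)..0, ∫ y in (-1 : ℝ)..0, u₂ (x, y) ^ 2 := by
    have J : (∫ y in (-1 : ℝ)..0, a y ^ 2) - m ^ 2
        ≤ ∫ x in (-1 : ℝ)..0, ∫ y in (-1 : ℝ)..0, (u (x, y) - b x) ^ 2 := by
      rw [← variance_identity hac m ham, swap_of_continuous (F := fun x y => (u (x, y) - b x) ^ 2)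
        (by simp only [Function.uncurry_def]; fun_prop)]
      apply intervalIntegral.integral_mono_on (by norm_num)
        (Continuous.intervalIntegrable (by fun_prop) _ _)
        (cont1 (fun y x => (u (x, y) - b x) ^ 2) (by simp only [Function.uncurry_def]; fun_prop))
      intro y _
      have h := sq_integral_le (g := fun x => u (x, y) - b x) (by fun_prop)
      rwa [intervalIntegral.integral_sub (Continuous.intervalIntegrable (by fun_prop) _ _)
        (hbc.intervalIntegrable _ _)] at h
    refine (mul_le_mul_of_nonneg_left J (sq_nonneg π)).trans ?_
    rw [← intervalIntegral.integral_const_mul]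
    apply intervalIntegral.integral_mono_on (by norm_num)
    · exact (cont1 (fun x y => (u (x, y) - b x) ^ 2)
        (by simp only [Function.uncurry_def]; fun_prop)).const_mul _
    · exact cont1 (fun x y => u₂ (x, y) ^ 2) (by simp only [Function.uncurry_def]; fun_prop)
    · intro x _
      exact wirtinger_neumann (f := fun y => u (x, y)) (fun y => h₂ x y) (by fun_prop)
  linarith

/-! ### The lower bound for the Dirichlet form on the guide -/

lemma isOpen_Gam : IsOpen Gam := by
  have : Continuous fun p : ℝ × ℝ => min p.1 p.2 := by fun_prop
  exact (isOpen_lt continuous_const this).inter (isOpen_lt this continuous_const)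

/-- The guide is the disjoint union of the corner square and two half-strips of width one. -/
lemma Gam_eq : Gam = (II ×ˢ II ∪ II ×ˢ Ici 0) ∪ Ici 0 ×ˢ II := by
  ext ⟨x, y⟩
  simp only [Gam, II, mem_ofPred_eq, mem_union, mem_prod, mem_Ioo, mem_Ici, lt_min_iff, min_lt_iff]
  constructor
  · rintro ⟨⟨h1, h2⟩, h3⟩
    rcases lt_or_ge x 0 with hx | hx <;> rcases lt_or_ge y 0 with hy | hy
    · exact Or.inl (Or.inl ⟨⟨h1, hx⟩, h2, hy⟩)
    · exact Or.inl (Or.inr ⟨⟨h1, hx⟩, hy⟩)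
    · exact Or.inr ⟨hx, h2, hy⟩
    · rcases h3 with h3 | h3 <;> linarith
  · rintro ((⟨⟨h1, h2⟩, h3, h4⟩ | ⟨⟨h1, h2⟩, h3⟩) | ⟨h1, h2, h3⟩)
    · exact ⟨⟨h1, h3⟩, Or.inl h2⟩
    · exact ⟨⟨h1, by linarith⟩, Or.inl h2⟩
    · exact ⟨⟨by linarith, h2⟩, Or.inr h3⟩

lemma integral_Gam {g : ℝ × ℝ → ℝ} (hg : Integrable g) :
    ∫ p in Gam, g p = (∫ p in II ×ˢ II, g p) + (∫ p in II ×ˢ Ici 0, g p)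
      + ∫ p in Ici 0 ×ˢ II, g p := by
  have mI : MeasurableSet II := measurableSet_Ioo
  rw [Gam_eq, setIntegral_union _ (measurableSet_Ici.prod mI) hg.integrableOn hg.integrableOn,
    setIntegral_union _ (mI.prod measurableSet_Ici) hg.integrableOn hg.integrableOn]
  · rw [Set.disjoint_left]
    rintro ⟨x, y⟩ ⟨h1, h2⟩ ⟨h3, h4⟩
    exact absurd h2.2 (not_lt.2 h4)
  · rw [Set.disjoint_left]
    rintro ⟨x, y⟩ h ⟨h3, h4⟩
    rcases h with h | h
    · exact absurd h.1.2 (not_lt.2 h3)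
    · exact absurd h.1.2 (not_lt.2 h3)

lemma integral_II (f : ℝ → ℝ) : ∫ x in II, f x = ∫ x in (-1 : ℝ)..0, f x := by
  rw [intervalIntegral.integral_of_le (by norm_num), integral_Ioc_eq_integral_Ioo, II]

lemma integral_II_prod {g : ℝ × ℝ → ℝ} (hg : Integrable g) :
    ∫ p in II ×ˢ II, g p = ∫ x in (-1 : ℝ)..0, ∫ y in (-1 : ℝ)..0, g (x, y) := by
  rw [Measure.volume_eq_prod, setIntegral_prod _ hg.integrableOn]
  simp_rw [integral_II]

section
variable {w : ℝ × ℝ → ℝ}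

lemma continuous_dir (hw : ContDiff ℝ 1 w) (e : ℝ × ℝ) : Continuous fun p => fderiv ℝ w p e :=
  (hw.continuous_fderiv (by norm_num)).clm_apply continuous_const

lemma hcs_dir (hw : HasCompactSupport w) (e : ℝ × ℝ) :
    HasCompactSupport fun p => fderiv ℝ w p e :=
  hw.fderiv_apply ℝ e

lemma hasDerivAt_slice₁ (hw : ContDiff ℝ 1 w) (x y : ℝ) :
    HasDerivAt (fun t => w (t, y)) (fderiv ℝ w (x, y) (1, 0)) x :=
  ((hw.differentiable (by norm_num) (x, y)).hasFDerivAt).comp_hasDerivAt x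
    ((hasDerivAt_id x).prodMk (hasDerivAt_const x y))

lemma hasDerivAt_slice₂ (hw : ContDiff ℝ 1 w) (x y : ℝ) :
    HasDerivAt (fun t => w (x, t)) (fderiv ℝ w (x, y) (0, 1)) y :=
  ((hw.differentiable (by norm_num) (x, y)).hasFDerivAt).comp_hasDerivAt y
    ((hasDerivAt_const y x).prodMk (hasDerivAt_id y))

lemma integrable_sq_of_cc {g : ℝ × ℝ → ℝ} (hg : Continuous g) (hs : HasCompactSupport g) :
    Integrable fun p => g p ^ 2 := by
  have : (fun p => g p ^ 2) = fun p => g p * g p := by ext p; ring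
  rw [this]
  exact (hg.mul hg).integrable_of_hasCompactSupport hs.mul_left

/-- On the vertical half-strip each horizontal slice of `w` vanishes at both ends, so the
transverse derivative alone already controls `w`. -/
lemma arm₁ (hw : ContDiff ℝ 1 w) (hs : HasCompactSupport w) (h0 : ∀ p ∉ Gam, w p = 0) :
    π ^ 2 * ∫ p in II ×ˢ Ici 0, w p ^ 2 ≤ ∫ p in II ×ˢ Ici 0, (fderiv ℝ w p (1, 0)) ^ 2 := by
  have i1 := integrable_sq_of_cc hw.continuous hs
  have i2 := integrable_sq_of_cc (continuous_dir hw (1, 0)) (hcs_dir hs (1, 0))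
  rw [Measure.volume_eq_prod] at i1 i2 ⊢
  rw [← setIntegral_prod_swap II (Ici 0) (fun p => w p ^ 2),
    ← setIntegral_prod_swap II (Ici 0) (fun p => (fderiv ℝ w p (1, 0)) ^ 2),
    setIntegral_prod (fun z => w z.swap ^ 2) i1.swap.integrableOn,
    setIntegral_prod (fun z => (fderiv ℝ w z.swap (1, 0)) ^ 2) i2.swap.integrableOn, ← integral_const_mul]
  apply setIntegral_mono_on
  · have := i1.swap.integrableOn (s := Ici (0 : ℝ) ×ˢ II)
    rw [IntegrableOn, ← Measure.prod_restrict] at this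
    exact this.integral_prod_left.const_mul _
  · have := i2.swap.integrableOn (s := Ici (0 : ℝ) ×ˢ II)
    rw [IntegrableOn, ← Measure.prod_restrict] at this
    exact this.integral_prod_left
  · exact measurableSet_Ici
  · intro y hy
    simp only [Prod.swap_prod_mk, integral_II]
    have hy' : (0 : ℝ) ≤ y := hy
    apply wirtinger_dirichlet (f := fun x => w (x, y)) (fun x => hasDerivAt_slice₁ hw x y)
    · exact (continuous_dir hw (1, 0)).comp (by fun_prop : Continuous fun x : ℝ => (x, y))
    · apply h0
      rintro ⟨h, -⟩
      exact absurd (lt_of_lt_of_le h (min_le_left _ _)) (lt_irrefl _)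
    · apply h0
      rintro ⟨-, h⟩
      exact absurd h (not_lt.2 (le_min le_rfl hy'))

lemma arm₂ (hw : ContDiff ℝ 1 w) (hs : HasCompactSupport w) (h0 : ∀ p ∉ Gam, w p = 0) :
    π ^ 2 * ∫ p in Ici 0 ×ˢ II, w p ^ 2 ≤ ∫ p in Ici 0 ×ˢ II, (fderiv ℝ w p (0, 1)) ^ 2 := by
  have i1 := integrable_sq_of_cc hw.continuous hs
  have i2 := integrable_sq_of_cc (continuous_dir hw (0, 1)) (hcs_dir hs (0, 1))
  rw [Measure.volume_eq_prod] at i1 i2 ⊢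
  rw [setIntegral_prod _ i1.integrableOn,
    setIntegral_prod _ i2.integrableOn, ← integral_const_mul]
  apply setIntegral_mono_on
  · have := i1.integrableOn (s := Ici (0 : ℝ) ×ˢ II)
    rw [IntegrableOn, ← Measure.prod_restrict] at this
    exact this.integral_prod_left.const_mul _
  · have := i2.integrableOn (s := Ici (0 : ℝ) ×ˢ II)
    rw [IntegrableOn, ← Measure.prod_restrict] at this
    exact this.integral_prod_left
  · exact measurableSet_Ici
  · intro x hx
    simp only [integral_II]
    have hx' : (0 : ℝ) ≤ x := hx
    apply wirtinger_dirichlet (f := fun y => w (x, y)) (fun y => hasDerivAt_slice₂ hw x y)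
    · exact (continuous_dir hw (0, 1)).comp (by fun_prop : Continuous fun y : ℝ => (x, y))
    · apply h0
      rintro ⟨h, -⟩
      exact absurd (lt_of_lt_of_le h (min_le_right _ _)) (lt_irrefl _)
    · apply h0
      rintro ⟨-, h⟩
      exact absurd h (not_lt.2 (le_min hx' le_rfl))

lemma integrable_gradSq2 (hw : ContDiff ℝ 1 w) (hs : HasCompactSupport w) :
    Integrable (gradSq2 w) :=
  (integrable_sq_of_cc (continuous_dir hw (1, 0)) (hcs_dir hs (1, 0))).add
    (integrable_sq_of_cc (continuous_dir hw (0, 1)) (hcs_dir hs (0, 1)))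

/-- The estimate behind both parts of the theorem: on `Γ` the Dirichlet form is at least
`π² ‖w‖²` up to a rank-one defect, the squared mean of `w` over the corner square. The square is
treated by `poincare_square` and the two half-strips by `arm₁` and `arm₂`. -/
theorem energy_lower_bound (hw : ContDiff ℝ 1 w) (hs : HasCompactSupport w)
    (h0 : ∀ p ∉ Gam, w p = 0) :
    π ^ 2 * ((∫ p in Gam, w p ^ 2) - (∫ p in II ×ˢ II, w p) ^ 2) ≤ ∫ p in Gam, gradSq2 w p := by
  have i0 := integrable_sq_of_cc hw.continuous hs
  have i1 := integrable_sq_of_cc (continuous_dir hw (1, 0)) (hcs_dir hs (1, 0))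
  have i2 := integrable_sq_of_cc (continuous_dir hw (0, 1)) (hcs_dir hs (0, 1))
  have e : ∫ p in Gam, gradSq2 w p = (∫ p in Gam, (fderiv ℝ w p (1, 0)) ^ 2)
      + ∫ p in Gam, (fderiv ℝ w p (0, 1)) ^ 2 :=
    integral_add i1.integrableOn i2.integrableOn
  rw [e, integral_Gam i0, integral_Gam i1, integral_Gam i2]
  have hsq := poincare_square hw.continuous (continuous_dir hw (1, 0)) (continuous_dir hw (0, 1))
    (hasDerivAt_slice₁ hw) (hasDerivAt_slice₂ hw)
  rw [← integral_II_prod i0, ← integral_II_prod i1, ← integral_II_prod i2,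
    ← integral_II_prod (hw.continuous.integrable_of_hasCompactSupport hs)] at hsq
  have ha := arm₁ hw hs h0
  have hb := arm₂ hw hs h0
  have p1 : 0 ≤ ∫ p in Ici 0 ×ˢ II, (fderiv ℝ w p (1, 0)) ^ 2 :=
    integral_nonneg fun p => sq_nonneg _
  have p2 : 0 ≤ ∫ p in II ×ˢ Ici 0, (fderiv ℝ w p (0, 1)) ^ 2 :=
    integral_nonneg fun p => sq_nonneg _
  nlinarith

end

/-! ### Two-dimensional spaces of test functions -/

lemma integral_comb3 {μ : Measure (ℝ × ℝ)} {F G H : ℝ × ℝ → ℝ} (hF : Integrable F μ)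
    (hG : Integrable G μ) (hH : Integrable H μ) (a b c : ℝ) :
    ∫ p, (a * F p + b * G p + c * H p) ∂μ
      = a * (∫ p, F p ∂μ) + b * (∫ p, G p ∂μ) + c * ∫ p, H p ∂μ := by
  have h1 : Integrable (fun p => a * F p + b * G p) μ := (hF.const_mul a).add (hG.const_mul b)
  rw [integral_add h1 (hH.const_mul c), integral_add (hF.const_mul a) (hG.const_mul b),
    integral_const_mul, integral_const_mul, integral_const_mul]

lemma integral_sq_pos {u : ℝ × ℝ → ℝ} (hu : Continuous u) (h0 : ∀ p ∉ Gam, u p = 0)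
    (hi : IntegrableOn (fun p => u p ^ 2) Gam) (hne : ∃ p, u p ≠ 0) :
    0 < ∫ p in Gam, u p ^ 2 := by
  rw [setIntegral_pos_iff_support_of_nonneg_ae (Filter.Eventually.of_forall fun p => sq_nonneg _) hi]
  obtain ⟨p, hp⟩ := hne
  have ho : IsOpen (Function.support (fun p => u p ^ 2) ∩ Gam) :=
    (hu.pow 2).isOpen_support.inter isOpen_Gam
  refine ho.measure_pos volume ⟨p, ?_, ?_⟩
  · exact pow_ne_zero 2 hp
  · by_contra h
    exact hp (h0 p h)

lemma eq_zero_off_Gam {u : ℝ × ℝ → ℝ} (h : tsupport u ⊆ Gam) : ∀ p ∉ Gam, u p = 0 :=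
  fun _ hp => image_eq_zero_of_notMem_tsupport fun h' => hp (h h')

lemma exists_kernel_pair (r s : ℝ) : ∃ α β : ℝ, (α ≠ 0 ∨ β ≠ 0) ∧ α * r + β * s = 0 := by
  by_cases hr : r = 0
  · exact ⟨1, 0, Or.inl one_ne_zero, by simp [hr]⟩
  · exact ⟨-s, r, Or.inr hr, by ring⟩

lemma gradSq2_comb_le {f g : ℝ × ℝ → ℝ} (hf : ContDiff ℝ 1 f) (hg : ContDiff ℝ 1 g) (α β : ℝ)
    (p : ℝ × ℝ) : gradSq2 (α • f + β • g) p ≤ 2 * α ^ 2 * gradSq2 f p + 2 * β ^ 2 * gradSq2 g p := by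
  have hf' := hf.differentiable (by norm_num) p
  have hg' := hg.differentiable (by norm_num) p
  have : fderiv ℝ (α • f + β • g) p = α • fderiv ℝ f p + β • fderiv ℝ g p := by
    rw [fderiv_add (hf'.const_smul α) (hg'.const_smul β), fderiv_const_smul hf',
      fderiv_const_smul hg']
  simp only [gradSq2, this, add_apply, smul_apply, smul_eq_mul]
  nlinarith [sq_nonneg (α * fderiv ℝ f p (1, 0) - β * fderiv ℝ g p (1, 0)),
    sq_nonneg (α * fderiv ℝ f p (0, 1) - β * fderiv ℝ g p (0, 1))]

/-- The min-max statement: a two-dimensional `E` contains a nonzero `u` of mean zero over the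
corner square, and `energy_lower_bound` gives its Rayleigh quotient the lower bound `π²`. As `sSup`
takes a junk value on unbounded sets, the quotients over `E` must also be shown to be bounded. -/
theorem second_rayleigh (E : Submodule ℝ (ℝ × ℝ → ℝ))
    (hE : ∀ u ∈ E, ContDiff ℝ 1 u ∧ HasCompactSupport u ∧ tsupport u ⊆ Gam)
    (hfin : Module.finrank ℝ E = 2) :
    π ^ 2 ≤ sSup {r | ∃ u ∈ E, (∫ p in Gam, (u p) ^ 2) ≠ 0 ∧
        r = (∫ p in Gam, gradSq2 u p) / ∫ p in Gam, (u p) ^ 2} := by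
  have : FiniteDimensional ℝ E := Module.finite_of_finrank_eq_succ hfin
  let b := Module.finBasisOfFinrankEq ℝ E hfin
  set f : ℝ × ℝ → ℝ := (b 0 : ℝ × ℝ → ℝ) with hfdef
  set g : ℝ × ℝ → ℝ := (b 1 : ℝ × ℝ → ℝ) with hgdef
  obtain ⟨hf1, hf2, hf3⟩ := hE f (b 0).2
  obtain ⟨hg1, hg2, hg3⟩ := hE g (b 1).2
  have hmem : ∀ α β : ℝ, α • f + β • g ∈ E := fun α β =>
    E.add_mem (E.smul_mem α (b 0).2) (E.smul_mem β (b 1).2)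
  have hspan : ∀ u ∈ E, ∃ α β : ℝ, u = α • f + β • g := by
    intro u hu
    refine ⟨b.repr ⟨u, hu⟩ 0, b.repr ⟨u, hu⟩ 1, ?_⟩
    have := b.sum_repr ⟨u, hu⟩
    rw [Fin.sum_univ_two] at this
    exact (congrArg Subtype.val this).symm
  have hne : ∀ α β : ℝ, (α ≠ 0 ∨ β ≠ 0) → ∃ p, (α • f + β • g) p ≠ 0 := by
    intro α β h
    by_contra! hc
    have hz : α • b 0 + β • b 1 = 0 := by
      apply Subtype.ext
      funext p
      exact hc p
    have hli := b.linearIndependent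
    have := Fintype.linearIndependent_iff.1 hli ![α, β] (by simpa [Fin.sum_univ_two] using hz)
    have h0 := this 0
    have h1 := this 1
    simp at h0 h1
    tauto
  have hpos : ∀ α β : ℝ, (α ≠ 0 ∨ β ≠ 0) → 0 < ∫ p in Gam, (α • f + β • g) p ^ 2 := by
    intro α β h
    obtain ⟨h1, h2, h3⟩ := hE _ (hmem α β)
    exact integral_sq_pos h1.continuous (eq_zero_off_Gam h3)
      (integrable_sq_of_cc h1.continuous h2).integrableOn (hne α β h)
  have if2 := (integrable_sq_of_cc hf1.continuous hf2).integrableOn (s := Gam)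
  have ig2 := (integrable_sq_of_cc hg1.continuous hg2).integrableOn (s := Gam)
  have ifg : IntegrableOn (fun p => f p * g p) Gam :=
    ((hf1.continuous.mul hg1.continuous).integrable_of_hasCompactSupport hf2.mul_right).integrableOn
  set S := ∫ p in Gam, f p ^ 2
  set T := ∫ p in Gam, g p ^ 2
  set X := ∫ p in Gam, f p * g p
  have hN : ∀ α β : ℝ, ∫ p in Gam, (α • f + β • g) p ^ 2
      = α ^ 2 * S + 2 * α * β * X + β ^ 2 * T := by
    intro α β
    rw [← integral_comb3 if2 ifg ig2]
    congr 1
    funext p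
    simp only [Pi.add_apply, Pi.smul_apply, smul_eq_mul]
    ring
  have hS : 0 < S := by simpa [hN] using hpos 1 0 (by simp)
  have hT : 0 < T := by simpa [hN] using hpos 0 1 (by simp)
  have hD : 0 < S * T - X ^ 2 := by
    have h := hpos T (-X) (Or.inl hT.ne')
    rw [hN] at h
    have : 0 < T * (S * T - X ^ 2) := by nlinarith
    exact (mul_pos_iff_of_pos_left hT).1 this
  set A := ∫ p in Gam, gradSq2 f p
  set B := ∫ p in Gam, gradSq2 g p
  have hA : 0 ≤ A := integral_nonneg fun p => by simp only [gradSq2, Pi.zero_apply]; positivity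
  have hB : 0 ≤ B := integral_nonneg fun p => by simp only [gradSq2, Pi.zero_apply]; positivity
  have hbdd : BddAbove {r | ∃ u ∈ E, (∫ p in Gam, (u p) ^ 2) ≠ 0 ∧
        r = (∫ p in Gam, gradSq2 u p) / ∫ p in Gam, (u p) ^ 2} := by
    -- the Gram matrix of `f, g` has least eigenvalue at least `(S T - X²) / (S + T)`
    refine ⟨2 * (A + B) * (S + T) / (S * T - X ^ 2), ?_⟩
    rintro r ⟨u, hu, hu0, rfl⟩
    obtain ⟨α, β, rfl⟩ := hspan u hu
    have hNp : 0 < ∫ p in Gam, (α • f + β • g) p ^ 2 :=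
      lt_of_le_of_ne (integral_nonneg fun p => sq_nonneg _) hu0.symm
    rw [div_le_div_iff₀ hNp hD]
    have hG : ∫ p in Gam, gradSq2 (α • f + β • g) p ≤ 2 * α ^ 2 * A + 2 * β ^ 2 * B := by
      rw [← integral_const_mul, ← integral_const_mul, ← integral_add
        ((integrable_gradSq2 hf1 hf2).integrableOn.const_mul _)
        ((integrable_gradSq2 hg1 hg2).integrableOn.const_mul _)]
      obtain ⟨h1, h2, -⟩ := hE _ hu
      exact integral_mono (integrable_gradSq2 h1 h2).integrableOn
        (((integrable_gradSq2 hf1 hf2).integrableOn.const_mul _).add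
          ((integrable_gradSq2 hg1 hg2).integrableOn.const_mul _))
        (fun p => gradSq2_comb_le hf1 hg1 α β p)
    rw [hN]
    have h1 : (α ^ 2 + β ^ 2) * (S * T - X ^ 2)
        ≤ (S + T) * (α ^ 2 * S + 2 * α * β * X + β ^ 2 * T) := by
      nlinarith [sq_nonneg (α * S + β * X), sq_nonneg (α * X + β * T)]
    have h2 : 2 * α ^ 2 * A + 2 * β ^ 2 * B ≤ 2 * (A + B) * (α ^ 2 + β ^ 2) := by
      nlinarith [mul_nonneg (sq_nonneg α) hB, mul_nonneg (sq_nonneg β) hA]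
    calc _ ≤ 2 * (A + B) * (α ^ 2 + β ^ 2) * (S * T - X ^ 2) :=
          mul_le_mul_of_nonneg_right (hG.trans h2) hD.le
      _ = 2 * (A + B) * ((α ^ 2 + β ^ 2) * (S * T - X ^ 2)) := by ring
      _ ≤ 2 * (A + B) * ((S + T) * (α ^ 2 * S + 2 * α * β * X + β ^ 2 * T)) :=
          mul_le_mul_of_nonneg_left h1 (by positivity)
      _ = _ := by ring
  obtain ⟨α, β, hαβ, hl⟩ :=
    exists_kernel_pair (∫ p in II ×ˢ II, f p) (∫ p in II ×ˢ II, g p)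
  have hp := hpos α β hαβ
  refine le_csSup_of_le hbdd ⟨_, hmem α β, hp.ne', rfl⟩ ?_
  obtain ⟨h1, h2, h3⟩ := hE _ (hmem α β)
  have hen := energy_lower_bound h1 h2 (eq_zero_off_Gam h3)
  have hl' : ∫ p in II ×ˢ II, (α • f + β • g) p = 0 := by
    rw [← hl, ← integral_const_mul, ← integral_const_mul, ← integral_add
      ((hf1.continuous.integrable_of_hasCompactSupport hf2).integrableOn.const_mul _)
      ((hg1.continuous.integrable_of_hasCompactSupport hg2).integrableOn.const_mul _)]
    rfl
  rw [hl'] at hen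
  rw [le_div_iff₀ hp]
  simpa using hen

/-! ### Cutoffs along level sets -/

lemma contDiff_of_forall_tsupport {f : ℝ × ℝ → ℝ} {n : WithTop ℕ∞}
    (h : ∀ x ∈ tsupport f, ContDiffAt ℝ n f x) : ContDiff ℝ n f := by
  rw [contDiff_iff_contDiffAt]
  intro x
  by_cases hx : x ∈ tsupport f
  · exact h x hx
  · exact contDiffAt_const.congr_of_eventuallyEq (notMem_tsupport_iff_eventuallyEq.1 hx)

lemma smoothTransition_deriv : ∃ M : ℝ, 0 ≤ M ∧ ∀ t : ℝ,
    (deriv smoothTransition t) ^ 2 ≤ M ∧ (deriv smoothTransition t ≠ 0 → 0 ≤ t ∧ t ≤ 1) := by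
  have hc : Continuous (deriv smoothTransition) :=
    (smoothTransition.contDiff (n := 1)).continuous_deriv (by norm_num)
  have hz : ∀ t, deriv smoothTransition t ≠ 0 → 0 ≤ t ∧ t ≤ 1 := by
    intro t ht
    constructor <;> by_contra! h
    · apply ht
      have : smoothTransition =ᶠ[nhds t] fun _ => 0 := by
        filter_upwards [Iio_mem_nhds h] with s hs using smoothTransition.zero_of_nonpos (le_of_lt hs)
      rw [this.deriv_eq]; simp
    · apply ht
      have : smoothTransition =ᶠ[nhds t] fun _ => 1 := by
        filter_upwards [Ioi_mem_nhds h] with s hs using smoothTransition.one_of_one_le (le_of_lt hs)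
      rw [this.deriv_eq]; simp
  obtain ⟨M, hM⟩ := (isCompact_Icc (a := (0 : ℝ)) (b := 1)).exists_bound_of_continuousOn
    (f := fun t => deriv smoothTransition t ^ 2) (by fun_prop)
  have hM0 : 0 ≤ M := (norm_nonneg _).trans (hM 0 (by simp))
  refine ⟨M, hM0, fun t => ⟨?_, hz t⟩⟩
  by_cases ht : deriv smoothTransition t = 0
  · simpa [ht] using hM0
  · exact (le_abs_self _).trans (hM t (hz t ht))

/-- Cutoff adapted to a function `q ≥ 0` vanishing off `Γ`: it is zero where `q ≤ N⁻²` or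
`|p|² ≥ 2 N²`, and one where `q ≥ 2 N⁻²` and `|p| ≤ N`. Cutting along level sets of
`q = u² + u'²`, rather than along the distance to the boundary, ensures that `q |∇η|²` is controlled
by `|∇u|²` and `|∇u'|²` alone. -/
def cutoff (q : ℝ × ℝ → ℝ) (N : ℝ) (p : ℝ × ℝ) : ℝ :=
  smoothTransition (N ^ 2 * q p - 1) * smoothTransition (2 - (p.1 ^ 2 + p.2 ^ 2) / N ^ 2)

section
variable {q : ℝ × ℝ → ℝ} {N : ℝ}

lemma cutoff_nonneg (p : ℝ × ℝ) : 0 ≤ cutoff q N p :=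
  mul_nonneg (smoothTransition.nonneg _) (smoothTransition.nonneg _)

lemma cutoff_le_one (p : ℝ × ℝ) : cutoff q N p ≤ 1 :=
  mul_le_one₀ (smoothTransition.le_one _) (smoothTransition.nonneg _) (smoothTransition.le_one _)

lemma cutoff_tsupport (hq : Continuous q) (h0 : ∀ p ∉ Gam, q p = 0) :
    tsupport (cutoff q N) ⊆ Gam := by
  have hcl : IsClosed {p | 1 ≤ N ^ 2 * q p} := isClosed_le continuous_const (by fun_prop)
  have : tsupport (cutoff q N) ⊆ {p | 1 ≤ N ^ 2 * q p} := by
    apply closure_minimal _ hcl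
    intro p hp
    by_contra h
    apply hp
    have h' : N ^ 2 * q p - 1 ≤ 0 := by
      have h2 : ¬ 1 ≤ N ^ 2 * q p := h
      linarith
    simp [cutoff, smoothTransition.zero_of_nonpos h']
  intro p hp
  by_contra h
  have h1 : 1 ≤ N ^ 2 * q p := this hp
  rw [h0 p h] at h1
  norm_num at h1

lemma cutoff_compact (hN : 1 ≤ N) : HasCompactSupport (cutoff q N) := by
  apply HasCompactSupport.intro (isCompact_closedBall (0 : ℝ × ℝ) (2 * N))
  intro p hp
  have h2 : 2 - (p.1 ^ 2 + p.2 ^ 2) / N ^ 2 ≤ 0 := by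
    have hN2 : 0 < N ^ 2 := by positivity
    rw [sub_nonpos, le_div_iff₀ hN2]
    rw [mem_closedBall_zero_iff, not_le, Prod.norm_def, lt_max_iff] at hp
    simp only [Real.norm_eq_abs] at hp
    rcases hp with hp | hp
    · nlinarith [sq_abs p.1, sq_nonneg p.2]
    · nlinarith [sq_abs p.2, sq_nonneg p.1]
  simp [cutoff, smoothTransition.zero_of_nonpos h2]

lemma cutoff_contDiffOn (hqd : ContDiffOn ℝ 2 q Gam) : ContDiffOn ℝ 2 (cutoff q N) Gam := by
  have hst : ContDiff ℝ 2 smoothTransition := smoothTransition.contDiff (n := 2)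
  apply ContDiffOn.mul
  · exact hst.comp_contDiffOn ((contDiffOn_const.mul hqd).sub contDiffOn_const)
  · apply ContDiff.contDiffOn
    apply hst.comp
    fun_prop

lemma cutoff_contDiff (hq : Continuous q) (h0 : ∀ p ∉ Gam, q p = 0)
    (hqd : ContDiffOn ℝ 2 q Gam) : ContDiff ℝ 2 (cutoff q N) := by
  apply contDiff_of_forall_tsupport
  intro p hp
  exact (cutoff_contDiffOn hqd).contDiffAt (isOpen_Gam.mem_nhds (cutoff_tsupport hq h0 hp))

lemma cutoff_eventually (hq : Continuous q) {p : ℝ × ℝ} (hp : 0 < q p) :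
    ∀ᶠ n : ℕ in Filter.atTop, cutoff q (n + 1) p = 1 ∧ fderiv ℝ (cutoff q (n + 1)) p = 0 := by
  have hlim : Filter.Tendsto (fun n : ℕ => ((n : ℝ) + 1)) Filter.atTop Filter.atTop :=
    Filter.tendsto_atTop_add_const_right _ _ tendsto_natCast_atTop_atTop
  have hlim2 : Filter.Tendsto (fun n : ℕ => ((n : ℝ) + 1) ^ 2) Filter.atTop Filter.atTop :=
    (Filter.tendsto_pow_atTop (by norm_num)).comp hlim
  filter_upwards [hlim2.eventually_ge_atTop (4 / q p),
    hlim2.eventually_ge_atTop (p.1 ^ 2 + p.2 ^ 2 + 1)] with n h1 h2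
  have hev : cutoff q (n + 1) =ᶠ[nhds p] fun _ => 1 := by
    have e1 : ∀ᶠ x in nhds p, q p / 2 < q x :=
      hq.continuousAt.eventually (lt_mem_nhds (by linarith))
    have e2 : ∀ᶠ x : ℝ × ℝ in nhds p, x.1 ^ 2 + x.2 ^ 2 < p.1 ^ 2 + p.2 ^ 2 + 1 := by
      have hc : Continuous fun x : ℝ × ℝ => x.1 ^ 2 + x.2 ^ 2 := by fun_prop
      exact hc.continuousAt.eventually (gt_mem_nhds (by linarith))
    filter_upwards [e1, e2] with x hx1 hx2
    rw [div_le_iff₀ hp] at h1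
    have hN2 : (0 : ℝ) < ((n : ℝ) + 1) ^ 2 := by positivity
    rw [cutoff, smoothTransition.one_of_one_le, smoothTransition.one_of_one_le, one_mul]
    · have : (x.1 ^ 2 + x.2 ^ 2) / ((n : ℝ) + 1) ^ 2 ≤ 1 := by
        rw [div_le_one hN2]; linarith
      linarith
    · nlinarith
  refine ⟨hev.eq_of_nhds, ?_⟩
  rw [hev.fderiv_eq]; simp

lemma cutoff_fderiv {u u' : ℝ × ℝ → ℝ} {p : ℝ × ℝ} (hu : DifferentiableAt ℝ u p)
    (hu' : DifferentiableAt ℝ u' p) (e : ℝ × ℝ) :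
    fderiv ℝ (cutoff (fun p => u p ^ 2 + u' p ^ 2) N) p e
      = deriv smoothTransition (N ^ 2 * (u p ^ 2 + u' p ^ 2) - 1)
          * (N ^ 2 * (2 * (u p * fderiv ℝ u p e + u' p * fderiv ℝ u' p e)))
          * smoothTransition (2 - (p.1 ^ 2 + p.2 ^ 2) / N ^ 2)
        - smoothTransition (N ^ 2 * (u p ^ 2 + u' p ^ 2) - 1)
          * (deriv smoothTransition (2 - (p.1 ^ 2 + p.2 ^ 2) / N ^ 2)
          * ((2 * (p.1 * e.1 + p.2 * e.2)) / N ^ 2)) := by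
  have hst : Differentiable ℝ smoothTransition :=
    (smoothTransition.contDiff (n := 1)).differentiable (by norm_num)
  have hA : HasFDerivAt (fun p => N ^ 2 * (u p ^ 2 + u' p ^ 2) - 1) _ p :=
    (((hu.hasFDerivAt.pow 2).add (hu'.hasFDerivAt.pow 2)).const_mul (N ^ 2)).sub_const 1
  have hB : HasFDerivAt (fun p : ℝ × ℝ => 2 - (p.1 ^ 2 + p.2 ^ 2) * (N ^ 2)⁻¹) _ p :=
    ((((hasFDerivAt_fst (𝕜 := ℝ) (p := p)).pow 2).add
      ((hasFDerivAt_snd (𝕜 := ℝ) (p := p)).pow 2)).mul_const ((N ^ 2)⁻¹)).const_sub 2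
  have hAB := ((hst _).hasDerivAt.comp_hasFDerivAt p hA).mul
    ((hst _).hasDerivAt.comp_hasFDerivAt p hB)
  have heq : cutoff (fun p => u p ^ 2 + u' p ^ 2) N
      = (smoothTransition ∘ fun p => N ^ 2 * (u p ^ 2 + u' p ^ 2) - 1)
        * (smoothTransition ∘ fun p : ℝ × ℝ => 2 - (p.1 ^ 2 + p.2 ^ 2) * (N ^ 2)⁻¹) := by
    funext x
    simp [cutoff, div_eq_mul_inv]
  rw [heq, hAB.fderiv]
  simp [div_eq_mul_inv]
  ring

/-- Contribution of the level factor to `cutoff_bound`, with `Q = u² + u'²`, `Y` half a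
directional derivative of `Q`, and `V` the sum of the squared directional derivatives of `u`
and `u'`. -/
lemma level_factor_bound {M d c N Q Y V : ℝ} (hM0 : 0 ≤ M) (hd : d ^ 2 ≤ M) (hc : c ^ 2 ≤ 1)
    (hQ : 0 ≤ Q) (hV : 0 ≤ V) (hY : Y ^ 2 ≤ Q * V)
    (hs : d ≠ 0 → 0 ≤ N ^ 2 * Q - 1 ∧ N ^ 2 * Q - 1 ≤ 1) :
    Q * (d * (N ^ 2 * (2 * Y)) * c) ^ 2 ≤ 16 * M * V := by
  by_cases h0 : d = 0
  · have : Q * (d * (N ^ 2 * (2 * Y)) * c) ^ 2 = 0 := by rw [h0]; ring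
    rw [this]; positivity
  · obtain ⟨h1, h2⟩ := hs h0
    have hP0 : 0 ≤ N ^ 2 * Q := by linarith
    have hP : (N ^ 2 * Q) ^ 2 ≤ 4 := by nlinarith
    calc Q * (d * (N ^ 2 * (2 * Y)) * c) ^ 2
        = (d ^ 2 * c ^ 2) * (4 * (N ^ 2) ^ 2 * Q * Y ^ 2) := by ring
      _ ≤ (M * 1) * (4 * (N ^ 2) ^ 2 * Q * (Q * V)) := by gcongr
      _ = (4 * M * V) * (N ^ 2 * Q) ^ 2 := by ring
      _ ≤ (4 * M * V) * 4 := by gcongr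
      _ = _ := by ring

/-- Contribution of the radial factor to `cutoff_bound`, with `Q = u² + u'²`, in the
direction `(e₁, e₂)`. -/
lemma spatial_factor_bound {M d k N Q x y e₁ e₂ : ℝ} (hM0 : 0 ≤ M) (hd : d ^ 2 ≤ M)
    (hk : k ^ 2 ≤ 1) (hQ : 0 ≤ Q) (hN : 1 ≤ N) (he : e₁ ^ 2 + e₂ ^ 2 = 1)
    (hs : d ≠ 0 → 0 ≤ 2 - (x ^ 2 + y ^ 2) / N ^ 2) :
    Q * (k * (d * ((2 * (x * e₁ + y * e₂)) / N ^ 2))) ^ 2 ≤ 16 * M * Q := by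
  by_cases h0 : d = 0
  · have : Q * (k * (d * ((2 * (x * e₁ + y * e₂)) / N ^ 2))) ^ 2 = 0 := by rw [h0]; ring
    rw [this]; positivity
  · have h1 := hs h0
    have hN2 : 1 ≤ N ^ 2 := one_le_pow₀ hN
    have hN0 : 0 < N ^ 2 := by linarith
    have h3 : (x ^ 2 + y ^ 2) ≤ 2 * N ^ 2 := by
      rw [← div_le_iff₀ hN0]; linarith
    have h4 : (x * e₁ + y * e₂) ^ 2 ≤ x ^ 2 + y ^ 2 := by
      have : (x * e₁ + y * e₂) ^ 2 ≤ (x ^ 2 + y ^ 2) * (e₁ ^ 2 + e₂ ^ 2) := by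
        nlinarith [sq_nonneg (x * e₂ - y * e₁)]
      rwa [he, mul_one] at this
    have h5 : ((2 * (x * e₁ + y * e₂)) / N ^ 2) ^ 2 ≤ 8 := by
      rw [div_pow, div_le_iff₀ (by positivity)]
      nlinarith
    calc Q * (k * (d * ((2 * (x * e₁ + y * e₂)) / N ^ 2))) ^ 2
        = Q * (k ^ 2 * (d ^ 2 * ((2 * (x * e₁ + y * e₂)) / N ^ 2) ^ 2)) := by ring
      _ ≤ Q * (1 * (M * 8)) := by gcongr
      _ ≤ 16 * M * Q := by nlinarith [mul_nonneg hM0 hQ]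

/-- Where the derivative of the level factor is nonzero, `1 ≤ N² (u² + u'²) ≤ 2`; this cancels
the factor `N²` in that derivative and makes the bound uniform in `N`. The radial factor has a bounded
derivative anyway. -/
lemma cutoff_bound {M : ℝ} (hM0 : 0 ≤ M) (hM : ∀ t : ℝ,
    (deriv smoothTransition t) ^ 2 ≤ M ∧ (deriv smoothTransition t ≠ 0 → 0 ≤ t ∧ t ≤ 1))
    (hN : 1 ≤ N) {u u' : ℝ × ℝ → ℝ} {p : ℝ × ℝ} (hu : DifferentiableAt ℝ u p)
    (hu' : DifferentiableAt ℝ u' p) {e : ℝ × ℝ} (he : e.1 ^ 2 + e.2 ^ 2 = 1) :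
    (u p ^ 2 + u' p ^ 2) * (fderiv ℝ (cutoff (fun p => u p ^ 2 + u' p ^ 2) N) p e) ^ 2
      ≤ 32 * M * ((fderiv ℝ u p e) ^ 2 + (fderiv ℝ u' p e) ^ 2 + (u p ^ 2 + u' p ^ 2)) := by
  rw [cutoff_fderiv hu hu']
  have hQ0 : 0 ≤ u p ^ 2 + u' p ^ 2 := by positivity
  have hsq : ∀ t, smoothTransition t ^ 2 ≤ 1 := fun t =>
    pow_le_one₀ (smoothTransition.nonneg t) (smoothTransition.le_one t)
  have T1 := level_factor_bound (V := (fderiv ℝ u p e) ^ 2 + (fderiv ℝ u' p e) ^ 2) hM0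
    (hM (N ^ 2 * (u p ^ 2 + u' p ^ 2) - 1)).1
    (hsq (2 - (p.1 ^ 2 + p.2 ^ 2) / N ^ 2)) hQ0 (by positivity)
    (Y := u p * fderiv ℝ u p e + u' p * fderiv ℝ u' p e)
    (by nlinarith [sq_nonneg (u p * fderiv ℝ u' p e - u' p * fderiv ℝ u p e)])
    (hM (N ^ 2 * (u p ^ 2 + u' p ^ 2) - 1)).2
  have T2 := spatial_factor_bound hM0 (hM (2 - (p.1 ^ 2 + p.2 ^ 2) / N ^ 2)).1
    (hsq (N ^ 2 * (u p ^ 2 + u' p ^ 2) - 1)) hQ0 hN he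
    (fun h => ((hM (2 - (p.1 ^ 2 + p.2 ^ 2) / N ^ 2)).2 h).1)
  have key : ∀ Q s t : ℝ, 0 ≤ Q → Q * (s - t) ^ 2 ≤ 2 * (Q * s ^ 2) + 2 * (Q * t ^ 2) :=
    fun Q s t hQ => by nlinarith [mul_nonneg hQ (sq_nonneg (s + t))]
  refine (key _ _ _ hQ0).trans ?_
  linarith

end

/-! ### Integration by parts with cutoffs and orthogonality of eigenfunctions -/

lemma ContDiffOn.dir {u : ℝ × ℝ → ℝ} (hu : ContDiffOn ℝ 2 u Gam) (e : ℝ × ℝ) :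
    ContDiffOn ℝ 1 (fun p => fderiv ℝ u p e) Gam :=
  (hu.fderiv_of_isOpen isOpen_Gam (by norm_num)).clm_apply contDiffOn_const

lemma diffAt_of_contDiffOn {n : WithTop ℕ∞} (hn : n ≠ 0) {u : ℝ × ℝ → ℝ}
    (hu : ContDiffOn ℝ n u Gam) {p : ℝ × ℝ} (hp : p ∈ Gam) : DifferentiableAt ℝ u p :=
  (hu.contDiffAt (isOpen_Gam.mem_nhds hp)).differentiableAt hn

section
variable {η F : ℝ × ℝ → ℝ}

/-- `∫_Γ ∂ₑ(η² F) = 0`, written out by the product rule. `F` is only regular in the open set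
`Γ`, but `η² F` extends by zero to a `C¹` function of compact support. -/
lemma integral_div_eq_zero (hη : ContDiff ℝ 2 η) (hs : HasCompactSupport η) (ht : tsupport η ⊆ Gam)
    (hF : ContDiffOn ℝ 1 F Gam) (e : ℝ × ℝ) :
    IntegrableOn (fun p => 2 * η p * fderiv ℝ η p e * F p + η p ^ 2 * fderiv ℝ F p e) Gam ∧
    ∫ p in Gam, (2 * η p * fderiv ℝ η p e * F p + η p ^ 2 * fderiv ℝ F p e) = 0 := by
  set ψ : ℝ × ℝ → ℝ := fun p => η p * (η p * F p) with hψ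
  have hψs : HasCompactSupport ψ := hs.mul_right
  have hψt : tsupport ψ ⊆ Gam := (tsupport_mul_subset_left).trans ht
  have hψc : ContDiff ℝ 1 ψ := by
    apply contDiff_of_forall_tsupport
    intro p hp
    have hη1 : ContDiffAt ℝ 1 η p := (hη.of_le (by norm_num)).contDiffAt
    exact hη1.mul (hη1.mul (hF.contDiffAt (isOpen_Gam.mem_nhds (hψt hp))))
  have hder : EqOn (fun p => 2 * η p * fderiv ℝ η p e * F p + η p ^ 2 * fderiv ℝ F p e)
      (fun p => fderiv ℝ ψ p e) Gam := by
    intro p hp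
    have h1 : HasFDerivAt η _ p := (hη.differentiable (by norm_num) p).hasFDerivAt
    have h2 : HasFDerivAt F _ p := (diffAt_of_contDiffOn (by norm_num) hF hp).hasFDerivAt
    have h3 := (h1.mul (h1.mul h2)).fderiv
    have h4 : fderiv ℝ ψ p = _ := h3
    simp only [h4, add_apply, smul_apply, smul_eq_mul, Pi.mul_apply]
    ring
  have hi : Integrable fun p => fderiv ℝ ψ p e :=
    (continuous_dir hψc e).integrable_of_hasCompactSupport (hcs_dir hψs e)
  constructor
  · exact hi.integrableOn.congr_fun hder.symm isOpen_Gam.measurableSet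
  · rw [setIntegral_congr_fun isOpen_Gam.measurableSet hder,
      setIntegral_eq_integral_of_forall_compl_eq_zero]
    · have := integral_mul_fderiv_eq_neg_fderiv_mul_of_integrable (μ := volume) (𝕜 := ℝ)
        (f := fun _ : ℝ × ℝ => (1 : ℝ)) (g := ψ) (v := e) (by simp) (by simpa using hi)
        (by simpa using hψc.continuous.integrable_of_hasCompactSupport hψs)
        (fun _ _ => differentiableAt_const _)
        (fun p _ => hψc.differentiable (by norm_num) p)
      simpa using this
    · intro p hp
      have : fderiv ℝ ψ p = 0 := by
        rw [(notMem_tsupport_iff_eventuallyEq.1 fun h => hp (hψt h)).fderiv_eq]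
        simp
      simp [this]

end

/-- A sequence of `C²` cutoffs `0 ≤ ηₙ ≤ 1`, compactly supported inside `Γ`, which at each point
where `(u, u') ≠ (0, 0)` is eventually equal to `1` with vanishing derivative, and whose gradients
satisfy `(u² + u'²) |∇ηₙ|² ≤ K (|∇u|² + |∇u'|² + u² + u'²)` on `Γ`. The last bound is uniform in
`n`, so that for `u, u'` of finite energy it allows dominated convergence as `n → ∞`. -/
structure CutoffSeq (u u' : ℝ × ℝ → ℝ) (η : ℕ → ℝ × ℝ → ℝ) (K : ℝ) : Prop where
  contDiff : ∀ n, ContDiff ℝ 2 (η n)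
  compact : ∀ n, HasCompactSupport (η n)
  tsupp : ∀ n, tsupport (η n) ⊆ Gam
  nonneg : ∀ n p, 0 ≤ η n p
  le_one : ∀ n p, η n p ≤ 1
  eventually : ∀ p, u p ^ 2 + u' p ^ 2 ≠ 0 →
    ∀ᶠ n in Filter.atTop, η n p = 1 ∧ fderiv ℝ (η n) p = 0
  bound : ∀ n, ∀ p ∈ Gam, (u p ^ 2 + u' p ^ 2) * gradSq2 (η n) p
    ≤ K * (gradSq2 u p + gradSq2 u' p + (u p ^ 2 + u' p ^ 2))

lemma exists_cutoffSeq {u u' : ℝ × ℝ → ℝ} (hu : Continuous u) (hu' : Continuous u')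
    (h0 : ∀ p ∉ Gam, u p = 0) (h0' : ∀ p ∉ Gam, u' p = 0)
    (hd : ContDiffOn ℝ 2 u Gam) (hd' : ContDiffOn ℝ 2 u' Gam) :
    ∃ η K, CutoffSeq u u' η K := by
  obtain ⟨M, hM0, hM⟩ := smoothTransition_deriv
  have hq : Continuous fun p => u p ^ 2 + u' p ^ 2 := by fun_prop
  have hq0 : ∀ p ∉ Gam, u p ^ 2 + u' p ^ 2 = 0 := fun p hp => by simp [h0 p hp, h0' p hp]
  have hqd : ContDiffOn ℝ 2 (fun p => u p ^ 2 + u' p ^ 2) Gam := (hd.pow 2).add (hd'.pow 2)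
  refine ⟨fun n => cutoff (fun p => u p ^ 2 + u' p ^ 2) (n + 1), 64 * M,
    fun n => cutoff_contDiff hq hq0 hqd, fun n => cutoff_compact (by simp),
    fun n => cutoff_tsupport hq hq0, fun n p => cutoff_nonneg p, fun n p => cutoff_le_one p,
    fun p hp => cutoff_eventually hq (lt_of_le_of_ne (by positivity) hp.symm), ?_⟩
  intro n p hp
  have a := diffAt_of_contDiffOn (by norm_num) hd hp
  have a' := diffAt_of_contDiffOn (by norm_num) hd' hp
  have b1 := cutoff_bound hM0 hM (N := n + 1) (by simp) a a' (e := (1, 0)) (by norm_num)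
  have b2 := cutoff_bound hM0 hM (N := n + 1) (by simp) a a' (e := (0, 1)) (by norm_num)
  simp only [gradSq2]
  have hM1 : 0 ≤ M * (fderiv ℝ u p (1, 0)) ^ 2 := by positivity
  have hM2 : 0 ≤ M * (fderiv ℝ u p (0, 1)) ^ 2 := by positivity
  have hM3 : 0 ≤ M * (fderiv ℝ u' p (1, 0)) ^ 2 := by positivity
  have hM4 : 0 ≤ M * (fderiv ℝ u' p (0, 1)) ^ 2 := by positivity
  nlinarith

section
variable {lam lam' : ℝ} {u u' : ℝ × ℝ → ℝ} {η : ℕ → ℝ × ℝ → ℝ} {K : ℝ}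

lemma integrable_dominating (hu : IsEigenGam lam u) (hu' : IsEigenGam lam' u') :
    IntegrableOn (fun p => gradSq2 u p + gradSq2 u' p + (u p ^ 2 + u' p ^ 2)) Gam := by
  obtain ⟨-, -, -, i, j, -⟩ := hu
  obtain ⟨-, -, -, i', j', -⟩ := hu'
  exact (j.add j').add (i.add i')

lemma integrable_mul (hu : IsEigenGam lam u) (hu' : IsEigenGam lam' u') :
    IntegrableOn (fun p => u p * u' p) Gam := by
  obtain ⟨c, -, -, i, -⟩ := hu
  obtain ⟨c', -, -, i', -⟩ := hu'
  refine Integrable.mono' (i.add i') (c.mul c').aestronglyMeasurable.restrict ?_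
  refine Filter.Eventually.of_forall fun p => ?_
  rw [Real.norm_eq_abs, Pi.add_apply, abs_le]
  constructor <;> nlinarith [sq_nonneg (u p + u' p), sq_nonneg (u p - u' p)]

lemma lap_eq (hu : IsEigenGam lam u) {p : ℝ × ℝ} (hp : p ∈ Gam) :
    fderiv ℝ (fun x => fderiv ℝ u x (1, 0)) p (1, 0)
      + fderiv ℝ (fun x => fderiv ℝ u x (0, 1)) p (0, 1) = - (lam * u p) := by
  obtain ⟨-, -, -, -, -, h, -⟩ := hu
  have := h p hp
  simp only [lap2, pd1, pd2] at this
  unfold pd1 pd2 at this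
  linarith

/-- Eigenfunctions with different eigenvalues are orthogonal in `L²(Γ)`. The divergence of
`η² (u' ∇u - u ∇u')` has integral zero and equals `η² (λ' - λ) u u'` plus terms in `∇η`, which
vanish in the limit along the cutoffs. -/
lemma eigen_orthogonal (hu : IsEigenGam lam u) (hu' : IsEigenGam lam' u')
    (hη : CutoffSeq u u' η K) : (lam' - lam) * ∫ p in Gam, u p * u' p = 0 := by
  have hD := integrable_dominating hu hu'
  have hl := @lap_eq _ _ hu
  have hl' := @lap_eq _ _ hu'
  obtain ⟨c, z, d, -⟩ := hu
  obtain ⟨c', z', d', -⟩ := hu'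
  have hW : ∀ e, ContDiffOn ℝ 1 (fun p => u' p * fderiv ℝ u p e - u p * fderiv ℝ u' p e) Gam :=
    fun e => ((d'.of_le (by norm_num)).mul (d.dir e)).sub
      ((d.of_le (by norm_num)).mul (d'.dir e))
  have hWd : ∀ e, ∀ p ∈ Gam,
      fderiv ℝ (fun p => u' p * fderiv ℝ u p e - u p * fderiv ℝ u' p e) p e
        = u' p * fderiv ℝ (fun x => fderiv ℝ u x e) p e
          - u p * fderiv ℝ (fun x => fderiv ℝ u' x e) p e := by
    intro e p hp
    have a := (diffAt_of_contDiffOn (by norm_num) d hp).hasFDerivAt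
    have a' := (diffAt_of_contDiffOn (by norm_num) d' hp).hasFDerivAt
    have b := (diffAt_of_contDiffOn (by norm_num) (d.dir e) hp).hasFDerivAt
    have b' := (diffAt_of_contDiffOn (by norm_num) (d'.dir e) hp).hasFDerivAt
    have h := ((a'.mul b).sub (a.mul b')).fderiv
    have h' : fderiv ℝ (fun p => u' p * fderiv ℝ u p e - u p * fderiv ℝ u' p e) p = _ := h
    rw [h']
    simp only [add_apply, sub_apply, smul_apply, smul_eq_mul]
    ring
  -- the divergence of `η² (u' ∇u - u ∇u')`
  set G : ℕ → ℝ × ℝ → ℝ := fun n p =>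
    2 * η n p * fderiv ℝ (η n) p (1, 0)
        * (u' p * fderiv ℝ u p (1, 0) - u p * fderiv ℝ u' p (1, 0))
      + 2 * η n p * fderiv ℝ (η n) p (0, 1)
        * (u' p * fderiv ℝ u p (0, 1) - u p * fderiv ℝ u' p (0, 1))
      + η n p ^ 2 * ((lam' - lam) * (u p * u' p)) with hG
  have hGeq : ∀ n, EqOn (G n) (fun p =>
      (2 * η n p * fderiv ℝ (η n) p (1, 0)
        * (u' p * fderiv ℝ u p (1, 0) - u p * fderiv ℝ u' p (1, 0))
        + η n p ^ 2 * fderiv ℝ (fun p => u' p * fderiv ℝ u p (1, 0)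
          - u p * fderiv ℝ u' p (1, 0)) p (1, 0))
      + (2 * η n p * fderiv ℝ (η n) p (0, 1)
        * (u' p * fderiv ℝ u p (0, 1) - u p * fderiv ℝ u' p (0, 1))
        + η n p ^ 2 * fderiv ℝ (fun p => u' p * fderiv ℝ u p (0, 1)
          - u p * fderiv ℝ u' p (0, 1)) p (0, 1))) Gam := by
    intro n p hp
    simp only [hG]
    rw [hWd _ p hp, hWd _ p hp]
    linear_combination (- η n p ^ 2 * u' p) * hl hp + (η n p ^ 2 * u p) * hl' hp
  have hdiv := fun n e => integral_div_eq_zero (hη.contDiff n) (hη.compact n) (hη.tsupp n) (hW e) e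
  have hG0 : ∀ n, ∫ p in Gam, G n p = 0 := by
    intro n
    rw [setIntegral_congr_fun isOpen_Gam.measurableSet (hGeq n),
      integral_add (hdiv n _).1 (hdiv n _).1, (hdiv n _).2, (hdiv n _).2, add_zero]
  have hGi : ∀ n, IntegrableOn (G n) Gam := fun n =>
    ((hdiv n (1, 0)).1.add (hdiv n (0, 1)).1).congr_fun (hGeq n).symm isOpen_Gam.measurableSet
  have hlim : Filter.Tendsto (fun n => ∫ p in Gam, G n p) Filter.atTop
      (nhds (∫ p in Gam, (lam' - lam) * (u p * u' p))) := by
    refine tendsto_integral_of_dominated_convergence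
      (fun p => (2 * K + 2 + |lam' - lam|) * (gradSq2 u p + gradSq2 u' p + (u p ^ 2 + u' p ^ 2)))
      (fun n => (hGi n).aestronglyMeasurable) (hD.const_mul _) ?_ ?_
    · intro n
      filter_upwards [ae_restrict_mem isOpen_Gam.measurableSet] with p hp
      have hb := hη.bound n p hp
      have h0 := hη.nonneg n p
      have h1 := hη.le_one n p
      simp only [hG, gradSq2] at hb ⊢
      generalize fderiv ℝ (η n) p (1, 0) = x at *
      generalize fderiv ℝ (η n) p (0, 1) = y at *
      generalize fderiv ℝ u p (1, 0) = a at *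
      generalize fderiv ℝ u p (0, 1) = b at *
      generalize fderiv ℝ u' p (1, 0) = a' at *
      generalize fderiv ℝ u' p (0, 1) = b' at *
      generalize u p = s at *
      generalize u' p = t at *
      generalize η n p = r at *
      have key : ∀ x s a : ℝ, |2 * r * x * (s * a)| ≤ s ^ 2 * x ^ 2 + a ^ 2 := by
        intro x s a
        have : 2 * r * x * (s * a) = r * (2 * (s * x) * a) := by ring
        rw [this, abs_mul, abs_of_nonneg h0]
        refine (mul_le_of_le_one_left (abs_nonneg _) h1).trans ?_
        rw [abs_le]
        constructor <;> nlinarith [sq_nonneg (s * x + a), sq_nonneg (s * x - a)]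
      have k1 := key x t a
      have k2 := key x s a'
      have k3 := key y t b
      have k4 := key y s b'
      have k5 : |r ^ 2 * ((lam' - lam) * (s * t))| ≤ |lam' - lam| * (s ^ 2 + t ^ 2) := by
        rw [abs_mul, abs_mul, abs_of_nonneg (sq_nonneg r)]
        refine (mul_le_of_le_one_left (by positivity) (pow_le_one₀ h0 h1)).trans ?_
        refine mul_le_mul_of_nonneg_left ?_ (abs_nonneg _)
        rw [abs_le]
        constructor <;> nlinarith [sq_nonneg (s + t), sq_nonneg (s - t)]
      have hz : 0 ≤ |lam' - lam| * (a ^ 2 + b ^ 2 + (a' ^ 2 + b' ^ 2)) := by positivity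
      have hsplit : 2 * r * x * (t * a - s * a') + 2 * r * y * (t * b - s * b')
            + r ^ 2 * ((lam' - lam) * (s * t))
          = (2 * r * x * (t * a) - 2 * r * x * (s * a'))
            + (2 * r * y * (t * b) - 2 * r * y * (s * b'))
            + r ^ 2 * ((lam' - lam) * (s * t)) := by ring
      rw [Real.norm_eq_abs, hsplit]
      rw [abs_le] at k1 k2 k3 k4 k5 ⊢
      constructor <;> nlinarith
    · filter_upwards [ae_restrict_mem isOpen_Gam.measurableSet] with p hp
      by_cases hq : u p ^ 2 + u' p ^ 2 = 0
      · have h1 : u p = 0 := by nlinarith [sq_nonneg (u p), sq_nonneg (u' p)]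
        have h2 : u' p = 0 := by nlinarith [sq_nonneg (u p), sq_nonneg (u' p)]
        simp [hG, h1, h2]
      · refine tendsto_const_nhds.congr' ?_
        filter_upwards [hη.eventually p hq] with n hn
        simp [hG, hn.1, hn.2]
  simp only [hG0] at hlim
  rw [← integral_const_mul]
  exact tendsto_nhds_unique hlim tendsto_const_nhds

end

/-! ### Energy of combinations of eigenfunctions -/

section
variable {lam lam' : ℝ} {u u' : ℝ × ℝ → ℝ} {η : ℕ → ℝ × ℝ → ℝ} {K : ℝ}

lemma integral_sub_null {μ : Measure (ℝ × ℝ)} {F a b : ℝ × ℝ → ℝ} (hF : Integrable F μ)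
    (ha : Integrable a μ) (hb : Integrable b μ) (ha0 : ∫ p, a p ∂μ = 0) (hb0 : ∫ p, b p ∂μ = 0) :
    ∫ p, (F p - (a p + b p)) ∂μ = ∫ p, F p ∂μ := by
  have hab : Integrable (fun p => a p + b p) μ := ha.add hb
  rw [integral_sub hF hab, integral_add ha hb, ha0, hb0, add_zero, sub_zero]

/-- For `v = α u + β u'`, so that `-Δv = h` with `h = α λ u + β λ' u'`, one has
`∫ |∇(η v)|² = ∫ (η² v h + v² |∇η|²)`: the integrands differ by `div (η² v ∇v)`. -/
lemma eigen_comb_energy (hu : IsEigenGam lam u) (hu' : IsEigenGam lam' u')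
    (hη : CutoffSeq u u' η K) (α β : ℝ) (n : ℕ) :
    IntegrableOn (fun p => η n p ^ 2 * ((α * u p + β * u' p) * (α * lam * u p + β * lam' * u' p))
      + (α * u p + β * u' p) ^ 2 * gradSq2 (η n) p) Gam ∧
    ContDiff ℝ 1 (fun p => η n p * (α * u p + β * u' p)) ∧
    ∫ p in Gam, gradSq2 (fun p => η n p * (α * u p + β * u' p)) p
      = ∫ p in Gam, (η n p ^ 2 * ((α * u p + β * u' p) * (α * lam * u p + β * lam' * u' p))
      + (α * u p + β * u' p) ^ 2 * gradSq2 (η n) p) := by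
  have hl := @lap_eq _ _ hu
  have hl' := @lap_eq _ _ hu'
  obtain ⟨c, z, d, -⟩ := hu
  obtain ⟨c', z', d', -⟩ := hu'
  set w : ℝ × ℝ → ℝ := fun p => η n p * (α * u p + β * u' p) with hw
  have hv : ContDiffOn ℝ 2 (fun p => α * u p + β * u' p) Gam :=
    (contDiffOn_const.mul d).add (contDiffOn_const.mul d')
  have hws : HasCompactSupport w := (hη.compact n).mul_right
  have hwt : tsupport w ⊆ Gam := tsupport_mul_subset_left.trans (hη.tsupp n)
  have hwc : ContDiff ℝ 1 w := by
    apply contDiff_of_forall_tsupport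
    intro p hp
    exact (((hη.contDiff n).contDiffAt).mul
      (hv.contDiffAt (isOpen_Gam.mem_nhds (hwt hp)))).of_le (by norm_num)
  have hW : ∀ e, ContDiffOn ℝ 1
      (fun p => (α * u p + β * u' p) * (α * fderiv ℝ u p e + β * fderiv ℝ u' p e)) Gam :=
    fun e => (hv.of_le (by norm_num)).mul
      ((contDiffOn_const.mul (d.dir e)).add (contDiffOn_const.mul (d'.dir e)))
  have hWd : ∀ e, ∀ p ∈ Gam,
      fderiv ℝ (fun p => (α * u p + β * u' p) * (α * fderiv ℝ u p e + β * fderiv ℝ u' p e)) p e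
        = (α * fderiv ℝ u p e + β * fderiv ℝ u' p e) ^ 2
          + (α * u p + β * u' p) * (α * fderiv ℝ (fun x => fderiv ℝ u x e) p e
            + β * fderiv ℝ (fun x => fderiv ℝ u' x e) p e) := by
    intro e p hp
    have a := (diffAt_of_contDiffOn (by norm_num) d hp).hasFDerivAt
    have a' := (diffAt_of_contDiffOn (by norm_num) d' hp).hasFDerivAt
    have b := (diffAt_of_contDiffOn (by norm_num) (d.dir e) hp).hasFDerivAt
    have b' := (diffAt_of_contDiffOn (by norm_num) (d'.dir e) hp).hasFDerivAt
    have h := (((a.const_mul α).add (a'.const_mul β)).mul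
      ((b.const_mul α).add (b'.const_mul β))).fderiv
    have h' : fderiv ℝ (fun p => (α * u p + β * u' p)
      * (α * fderiv ℝ u p e + β * fderiv ℝ u' p e)) p = _ := h
    rw [h']
    simp only [add_apply, smul_apply, smul_eq_mul, Pi.add_apply]
    ring
  have hwd : ∀ e, ∀ p ∈ Gam, fderiv ℝ w p e
      = η n p * (α * fderiv ℝ u p e + β * fderiv ℝ u' p e)
        + (α * u p + β * u' p) * fderiv ℝ (η n) p e := by
    intro e p hp
    have a := (diffAt_of_contDiffOn (by norm_num) d hp).hasFDerivAt
    have a' := (diffAt_of_contDiffOn (by norm_num) d' hp).hasFDerivAt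
    have b := ((hη.contDiff n).differentiable (by norm_num) p).hasFDerivAt
    have h := (b.mul ((a.const_mul α).add (a'.const_mul β))).fderiv
    have h' : fderiv ℝ w p = _ := h
    rw [h']
    simp only [add_apply, smul_apply, smul_eq_mul, Pi.add_apply]
  have hdiv := fun e => integral_div_eq_zero (hη.contDiff n) (hη.compact n) (hη.tsupp n) (hW e) e
  -- `|∇(ηv)|²` differs from the right-hand integrand by `div (η² v ∇v)`
  have hEq : EqOn (fun p => η n p ^ 2 * ((α * u p + β * u' p)
        * (α * lam * u p + β * lam' * u' p))
      + (α * u p + β * u' p) ^ 2 * gradSq2 (η n) p)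
      (fun p => gradSq2 w p - ((2 * η n p * fderiv ℝ (η n) p (1, 0)
        * ((α * u p + β * u' p) * (α * fderiv ℝ u p (1, 0) + β * fderiv ℝ u' p (1, 0)))
        + η n p ^ 2 * fderiv ℝ (fun p => (α * u p + β * u' p)
          * (α * fderiv ℝ u p (1, 0) + β * fderiv ℝ u' p (1, 0))) p (1, 0))
        + (2 * η n p * fderiv ℝ (η n) p (0, 1)
        * ((α * u p + β * u' p) * (α * fderiv ℝ u p (0, 1) + β * fderiv ℝ u' p (0, 1)))
        + η n p ^ 2 * fderiv ℝ (fun p => (α * u p + β * u' p)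
          * (α * fderiv ℝ u p (0, 1) + β * fderiv ℝ u' p (0, 1))) p (0, 1)))) Gam := by
    intro p hp
    simp only [gradSq2]
    rw [hWd _ p hp, hWd _ p hp, hwd _ p hp, hwd _ p hp]
    linear_combination (η n p ^ 2 * (α * u p + β * u' p) * α) * hl hp
      + (η n p ^ 2 * (α * u p + β * u' p) * β) * hl' hp
  have hi := (integrable_gradSq2 hwc hws).integrableOn (s := Gam)
  have hZ := (hdiv (1, 0)).1.add (hdiv (0, 1)).1
  refine ⟨(hi.sub hZ).congr_fun hEq.symm isOpen_Gam.measurableSet, hwc, ?_⟩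
  rw [setIntegral_congr_fun isOpen_Gam.measurableSet hEq]
  exact (integral_sub_null hi (hdiv _).1 (hdiv _).1 (hdiv _).2 (hdiv _).2).symm

/-- A combination of eigenfunctions of mean zero over the corner square satisfies
`π² ‖v‖² ≤ ∫ v (-Δv)`. This is `energy_lower_bound` for `ηₙ v`, with the energy computed by
`eigen_comb_energy`, in the limit `n → ∞`. -/
lemma eigen_comb_bound (hu : IsEigenGam lam u) (hu' : IsEigenGam lam' u')
    (hη : CutoffSeq u u' η K) (α β : ℝ)
    (hl : ∫ p in II ×ˢ II, (α * u p + β * u' p) = 0) :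
    π ^ 2 * ∫ p in Gam, (α * u p + β * u' p) ^ 2
      ≤ ∫ p in Gam, (α * u p + β * u' p) * (α * lam * u p + β * lam' * u' p) := by
  have hE := eigen_comb_energy hu hu' hη α β
  have hD := integrable_dominating hu hu'
  have huu := integrable_mul hu hu'
  obtain ⟨c, z, d, i, -⟩ := hu
  obtain ⟨c', z', d', i', -⟩ := hu'
  have hvc : Continuous fun p => α * u p + β * u' p := by fun_prop
  have hηc : ∀ n, Continuous (η n) := fun n => (hη.contDiff n).continuous
  have hv2 : IntegrableOn (fun p => (α * u p + β * u' p) ^ 2) Gam := by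
    refine (((i.const_mul (α ^ 2)).add (huu.const_mul (2 * α * β))).add
      (i'.const_mul (β ^ 2))).congr (Filter.Eventually.of_forall fun p => ?_)
    simp only [Pi.add_apply]; ring
  have hvh : IntegrableOn (fun p => (α * u p + β * u' p)
      * (α * lam * u p + β * lam' * u' p)) Gam := by
    refine (((i.const_mul (α ^ 2 * lam)).add (huu.const_mul (α * β * (lam + lam')))).add
      (i'.const_mul (β ^ 2 * lam'))).congr (Filter.Eventually.of_forall fun p => ?_)
    simp only [Pi.add_apply]; ring
  have hpt : ∀ p, α * u p + β * u' p = 0 ∨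
      ∀ᶠ n in Filter.atTop, η n p = 1 ∧ fderiv ℝ (η n) p = 0 := by
    intro p
    by_cases hq : u p ^ 2 + u' p ^ 2 = 0
    · left
      have h1 : u p = 0 := by nlinarith [sq_nonneg (u p), sq_nonneg (u' p)]
      have h2 : u' p = 0 := by nlinarith [sq_nonneg (u p), sq_nonneg (u' p)]
      simp [h1, h2]
    · exact Or.inr (hη.eventually p hq)
  have L1 : Filter.Tendsto (fun n => ∫ p in Gam, (η n p * (α * u p + β * u' p)) ^ 2) Filter.atTop
      (nhds (∫ p in Gam, (α * u p + β * u' p) ^ 2)) := by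
    refine tendsto_integral_of_dominated_convergence _
      (fun n => (((hηc n).mul hvc).pow 2).aestronglyMeasurable.restrict) hv2 ?_ ?_
    · intro n
      refine Filter.Eventually.of_forall fun p => ?_
      rw [Real.norm_eq_abs, abs_of_nonneg (sq_nonneg _), mul_pow]
      exact mul_le_of_le_one_left (sq_nonneg _) (pow_le_one₀ (hη.nonneg n p) (hη.le_one n p))
    · refine Filter.Eventually.of_forall fun p => ?_
      rcases hpt p with h | h
      · simp [h]
      · refine tendsto_const_nhds.congr' ?_
        filter_upwards [h] with n hn
        simp [hn.1]
  have L2 : Filter.Tendsto (fun n => ∫ p in II ×ˢ II, η n p * (α * u p + β * u' p)) Filter.atTop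
      (nhds (∫ p in II ×ˢ II, (α * u p + β * u' p))) := by
    have hint : IntegrableOn (fun p => |α * u p + β * u' p|) (II ×ˢ II) :=
      (hvc.abs.continuousOn.integrableOn_compact
        (isCompact_Icc.prod isCompact_Icc :
          IsCompact (Icc (-1 : ℝ) 0 ×ˢ Icc (-1 : ℝ) 0))).mono_set
        (prod_mono Ioo_subset_Icc_self Ioo_subset_Icc_self)
    refine tendsto_integral_of_dominated_convergence _
      (fun n => ((hηc n).mul hvc).aestronglyMeasurable.restrict) hint ?_ ?_
    · intro n
      refine Filter.Eventually.of_forall fun p => ?_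
      rw [Real.norm_eq_abs, abs_mul, abs_of_nonneg (hη.nonneg n p)]
      exact mul_le_of_le_one_left (abs_nonneg _) (hη.le_one n p)
    · refine Filter.Eventually.of_forall fun p => ?_
      rcases hpt p with h | h
      · simp [h]
      · refine tendsto_const_nhds.congr' ?_
        filter_upwards [h] with n hn
        simp [hn.1]
  have L3 : Filter.Tendsto (fun n => ∫ p in Gam,
      gradSq2 (fun p => η n p * (α * u p + β * u' p)) p) Filter.atTop
      (nhds (∫ p in Gam, (α * u p + β * u' p) * (α * lam * u p + β * lam' * u' p))) := by
    simp_rw [fun n => (hE n).2.2]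
    refine tendsto_integral_of_dominated_convergence
      (fun p => |(α * u p + β * u' p) * (α * lam * u p + β * lam' * u' p)|
        + (α ^ 2 + β ^ 2) * K * (gradSq2 u p + gradSq2 u' p + (u p ^ 2 + u' p ^ 2)))
      (fun n => (hE n).1.aestronglyMeasurable) (hvh.abs.add (hD.const_mul _)) ?_ ?_
    · intro n
      filter_upwards [ae_restrict_mem isOpen_Gam.measurableSet] with p hp
      have hg : 0 ≤ gradSq2 (η n) p := by simp only [gradSq2]; positivity
      have hb := mul_le_mul_of_nonneg_left (hη.bound n p hp)
        (by positivity : 0 ≤ α ^ 2 + β ^ 2)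
      have hcs : (α * u p + β * u' p) ^ 2 ≤ (α ^ 2 + β ^ 2) * (u p ^ 2 + u' p ^ 2) := by
        nlinarith [sq_nonneg (α * u' p - β * u p)]
      have hcs' := mul_le_mul_of_nonneg_right hcs hg
      refine (norm_add_le _ _).trans (add_le_add ?_ ?_)
      · rw [Real.norm_eq_abs, abs_mul, abs_of_nonneg (sq_nonneg _)]
        exact mul_le_of_le_one_left (abs_nonneg _) (pow_le_one₀ (hη.nonneg n p) (hη.le_one n p))
      · rw [Real.norm_eq_abs, abs_of_nonneg (by positivity)]
        linarith
    · refine Filter.Eventually.of_forall fun p => ?_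
      rcases hpt p with h | h
      · simp [h]
      · refine tendsto_const_nhds.congr' ?_
        filter_upwards [h] with n hn
        simp [hn.1, hn.2, gradSq2]
  rw [hl] at L2
  have L4 := (L1.sub (L2.pow 2)).const_mul (π ^ 2)
  have := le_of_tendsto_of_tendsto' L4 L3 fun n =>
    energy_lower_bound (hE n).2.1 ((hη.compact n).mul_right) (fun p hp => by
      simp [z p hp, z' p hp])
  simpa using this

/-- Two independent eigenfunctions would have a nonzero combination `v = α u + β u'` of mean
zero over the corner square. By `eigen_comb_bound` and orthogonality,
`π² (α² ‖u‖² + β² ‖u'‖²) ≤ α² λ ‖u‖² + β² λ' ‖u'‖²`, which is impossible for `λ, λ' < π²`; for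
`λ = λ'` orthogonality is not needed. -/
theorem eigen_dependent (hlam : lam < π ^ 2) (hlam' : lam' < π ^ 2)
    (hu : IsEigenGam lam u) (hu' : IsEigenGam lam' u') : ¬ LinearIndependent ℝ ![u, u'] := by
  intro hli
  obtain ⟨η, K, hη⟩ := exists_cutoffSeq hu.1 hu'.1 hu.2.1 hu'.2.1 hu.2.2.1 hu'.2.2.1
  have horth := eigen_orthogonal hu hu' hη
  have huu := integrable_mul hu hu'
  obtain ⟨α, β, hαβ, hl⟩ :=
    exists_kernel_pair (∫ p in II ×ˢ II, u p) (∫ p in II ×ˢ II, u' p)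
  have hsq : ∀ {f : ℝ × ℝ → ℝ}, Continuous f → IntegrableOn f (II ×ˢ II) := fun hf =>
    (hf.continuousOn.integrableOn_compact
      (isCompact_Icc.prod isCompact_Icc :
        IsCompact (Icc (-1 : ℝ) 0 ×ˢ Icc (-1 : ℝ) 0))).mono_set
      (prod_mono Ioo_subset_Icc_self Ioo_subset_Icc_self)
  have hl' : ∫ p in II ×ˢ II, (α * u p + β * u' p) = 0 := by
    rw [integral_add ((hsq hu.1).const_mul _) ((hsq hu'.1).const_mul _), integral_const_mul,
      integral_const_mul, hl]
  have hb := eigen_comb_bound hu hu' hη α β hl'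
  have hne : ∃ p, α * u p + β * u' p ≠ 0 := by
    by_contra! hc
    have h := LinearIndependent.pair_iff.1 hli α β (by funext p; exact hc p)
    rcases hαβ with h' | h'
    · exact h' h.1
    · exact h' h.2
  obtain ⟨c, z, d, i, -, -, nz⟩ := hu
  obtain ⟨c', z', d', i', -, -, nz'⟩ := hu'
  have e1 : (fun p => (α * u p + β * u' p) ^ 2)
      = fun p => α ^ 2 * u p ^ 2 + 2 * α * β * (u p * u' p) + β ^ 2 * u' p ^ 2 := by
    funext p; ring
  have e2 : (fun p => (α * u p + β * u' p) * (α * lam * u p + β * lam' * u' p))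
      = fun p => α ^ 2 * lam * u p ^ 2 + α * β * (lam + lam') * (u p * u' p)
        + β ^ 2 * lam' * u' p ^ 2 := by
    funext p; ring
  have hp : 0 < ∫ p in Gam, (α * u p + β * u' p) ^ 2 := by
    apply integral_sq_pos (by fun_prop) (fun p hp => by simp [z p hp, z' p hp]) _ hne
    rw [e1]
    exact ((i.const_mul _).add (huu.const_mul _)).add (i'.const_mul _)
  rw [e1, integral_comb3 i huu i'] at hp hb
  rw [e2, integral_comb3 i huu i'] at hb
  have hS := integral_sq_pos c z i nz
  have hT := integral_sq_pos c' z' i' nz'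
  generalize ∫ p in Gam, u p ^ 2 = S at *
  generalize ∫ p in Gam, u' p ^ 2 = T at *
  generalize ∫ p in Gam, u p * u' p = X at *
  rcases mul_eq_zero.1 horth with h | h
  · have h' : lam' = lam := by linarith
    subst h'
    nlinarith
  · subst h
    have h1 : 0 ≤ α ^ 2 * S * (π ^ 2 - lam) :=
      mul_nonneg (by positivity) (by linarith)
    have h2 : 0 ≤ β ^ 2 * T * (π ^ 2 - lam') :=
      mul_nonneg (by positivity) (by linarith)
    rcases hαβ with h' | h'
    · have : 0 < α ^ 2 * S * (π ^ 2 - lam) := mul_pos (by positivity) (by linarith)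
      nlinarith
    · have : 0 < β ^ 2 * T * (π ^ 2 - lam') := mul_pos (by positivity) (by linarith)
      nlinarith

end

/-- Remark 2.2: the second Rayleigh quotient of the Dirichlet
Laplacian on the broken guide `Γ` is at least `π²` (min-max over two-dimensional
subspaces of `H¹₀(Γ)`); consequently there is at most one eigenvalue below `π²`:
any two eigenfunctions with eigenvalues below `π²` are linearly dependent. -/
theorem second_rayleigh_quotient_Gam_ge_pi_sq :
    (∀ E : Submodule ℝ (ℝ × ℝ → ℝ),
      (∀ u ∈ E, ContDiff ℝ 1 u ∧ HasCompactSupport u ∧ tsupport u ⊆ Gam) →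
      Module.finrank ℝ E = 2 →
      π ^ 2 ≤ sSup {r | ∃ u ∈ E, (∫ p in Gam, (u p) ^ 2) ≠ 0 ∧
        r = (∫ p in Gam, gradSq2 u p) / ∫ p in Gam, (u p) ^ 2}) ∧
    (∀ lam lam' : ℝ, lam < π ^ 2 → lam' < π ^ 2 →
      ∀ u u' : ℝ × ℝ → ℝ, IsEigenGam lam u → IsEigenGam lam' u' →
        ¬ LinearIndependent ℝ ![u, u']) := by
  exact ⟨second_rayleigh,
    fun _ _ h h' _ _ hu hu' => eigen_dependent h h' hu hu'⟩
end
end
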